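/- Let K be a number field and S a finite set of places of K containing all the archimedean ones. Let φ be an endomorphism of ℙ¹ defined over K of degree d ≥ 2 with good reduction outside S, and let P ∈ ℙ¹(K) be a periodic point of φ of period 3. Then |Tail(φ,K,P)| ≤ ((1 + 3B(|S|))B(|S|) + 1)(d−1), where B(s) = 2^{16s}. -/

import Mathlib

open NumberField IsDedekindDomain MvPolynomial
open scoped Classical nonZeroDivisors

set_option synthInstance.maxHeartbeats 1000000
set_option maxHeartbeats 1000000

noncomputable section

/-- The projective line over `K`. -/
abbrev P1 (K : Type*) [Field K] := Projectivization K (Fin 2 → K)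

variable {K : Type*} [Field K] [NumberField K]

/-- The additive `v`-adic valuation (order) of `x ∈ K`, with junk value `0` at `x = 0`,
normalized so that it is surjective onto `ℤ`. -/
def ordAt (v : HeightOneSpectrum (𝓞 K)) (x : K) : ℤ :=
  if hx : x = 0 then 0
  else - Multiplicative.toAdd (WithZero.unzero ((v.valuation K).ne_zero_iff.mpr hx))

/-- `min (v(x), v(y))` for a pair of coordinates, not both zero. -/
def minOrd (v : HeightOneSpectrum (𝓞 K)) (x y : K) : ℤ :=
  if x = 0 then ordAt v y else if y = 0 then ordAt v x else min (ordAt v x) (ordAt v y)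

/-- The `v`-adic logarithmic distance between two points of `ℙ¹(K)`:
`δ_v(P,Q) = v(x₁y₂ - x₂y₁) - min(v x₁, v y₁) - min(v x₂, v y₂)`, with value `⊤` when `P = Q`
(it is independent of the choice of homogeneous coordinates, so we compute it on the chosen
representatives). -/
def logDist (v : HeightOneSpectrum (𝓞 K)) (P Q : P1 K) : WithTop ℤ :=
  if P = Q then ⊤
  else ((ordAt v (P.rep 0 * Q.rep 1 - P.rep 1 * Q.rep 0)
        - minOrd v (P.rep 0) (P.rep 1) - minOrd v (Q.rep 0) (Q.rep 1) : ℤ) : WithTop ℤ)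

/-- An endomorphism of `ℙ¹` of degree `d` defined over `K`, given by a pair of homogeneous
forms of degree `d` with no common zero over the algebraic closure, together with the induced
self-map of `ℙ¹(K)`. -/
structure P1Map (K : Type*) [Field K] (d : ℕ) where
  toFun : P1 K → P1 K
  F : MvPolynomial (Fin 2) K
  G : MvPolynomial (Fin 2) K
  homF : F.IsHomogeneous d
  homG : G.IsHomogeneous d
  coprime : ∀ x y : AlgebraicClosure K,
    aeval ![x, y] F = 0 → aeval ![x, y] G = 0 → x = 0 ∧ y = 0
  compat : ∀ (x y : K) (hxy : ![x, y] ≠ 0)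
    (h : ![eval ![x, y] F, eval ![x, y] G] ≠ 0),
    toFun (Projectivization.mk K ![x, y] hxy) =
      Projectivization.mk K ![eval ![x, y] F, eval ![x, y] G] h

variable {d : ℕ}

/-- `φ` has good reduction at the finite place `v`: some representing pair of forms has
coefficients in the valuation ring at `v`, not all in the maximal ideal, and the reductions
of the two forms modulo `v` have no common zero in `ℙ¹` of the algebraic closure of the
residue field. -/
def GoodReductionAt (φ : P1Map K d) (v : HeightOneSpectrum (𝓞 K)) : Prop :=
  ∃ c : K, c ≠ 0 ∧
    ∃ F₀ G₀ : MvPolynomial (Fin 2) (v.valuation (K := K)).valuationSubring,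
      MvPolynomial.map ((v.valuation (K := K)).valuationSubring.subtype) F₀ = C c * φ.F ∧
      MvPolynomial.map ((v.valuation (K := K)).valuationSubring.subtype) G₀ = C c * φ.G ∧
      ((∃ m, F₀.coeff m ∉ IsLocalRing.maximalIdeal (v.valuation (K := K)).valuationSubring) ∨
        (∃ m, G₀.coeff m ∉ IsLocalRing.maximalIdeal (v.valuation (K := K)).valuationSubring)) ∧
      ∀ x y : AlgebraicClosure
          (IsLocalRing.ResidueField (v.valuation (K := K)).valuationSubring),
        eval ![x, y] (MvPolynomial.map
          ((algebraMap (IsLocalRing.ResidueField (v.valuation (K := K)).valuationSubring)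
              (AlgebraicClosure _)).comp
            (IsLocalRing.residue _)) F₀) = 0 →
        eval ![x, y] (MvPolynomial.map
          ((algebraMap (IsLocalRing.ResidueField (v.valuation (K := K)).valuationSubring)
              (AlgebraicClosure _)).comp
            (IsLocalRing.residue _)) G₀) = 0 →
        x = 0 ∧ y = 0

/-- `φ` has good reduction outside `S`, where `S` consists of all archimedean places together
with the finite places in `T`. -/
def GoodReductionOutside (φ : P1Map K d) (T : Finset (HeightOneSpectrum (𝓞 K))) : Prop :=
  ∀ v ∉ T, GoodReductionAt φ v

/-- `P` is a periodic point of `φ`. -/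
def IsPeriodicPoint (φ : P1Map K d) (P : P1 K) : Prop :=
  ∃ n, 0 < n ∧ φ.toFun^[n] P = P

/-- `P` is a preperiodic point of `φ`. -/
def IsPreperiodicPoint (φ : P1Map K d) (P : P1 K) : Prop :=
  ∃ m, IsPeriodicPoint φ (φ.toFun^[m] P)

/-- `P` is a tail point of `φ`: preperiodic but not periodic. -/
def IsTailPoint (φ : P1Map K d) (P : P1 K) : Prop :=
  IsPreperiodicPoint φ P ∧ ¬ IsPeriodicPoint φ P

/-- The set `Tail(φ,K,P)` of `K`-rational tail points of `P`: non-periodic points having `P`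
in their forward orbit. -/
def TailOf (φ : P1Map K d) (P : P1 K) : Set (P1 K) :=
  {Q | ¬ IsPeriodicPoint φ Q ∧ ∃ n, φ.toFun^[n] Q = P}

/-- `P = [a:b]` is a critical point of `φ = [F:G]`: the algebraic condition
`φ([x:y]) = φ([a:b])`, i.e. the form `G(a,b)·F(X,Y) - F(a,b)·G(X,Y)`, vanishes to order
at least `2` at `[a:b]`. -/
def IsCriticalPt (φ : P1Map K d) (P : P1 K) : Prop :=
  ∃ (a b : K) (hab : ![a, b] ≠ 0), P = Projectivization.mk K ![a, b] hab ∧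
    (C b * X 0 - C a * X 1) ^ 2 ∣
      (C (eval ![a, b] φ.G) * φ.F - C (eval ![a, b] φ.F) * φ.G)

/-- `P` belongs to a critical cycle of `φ`: it lies in the orbit of a critical periodic
point. -/
def InCriticalCycle (φ : P1Map K d) (P : P1 K) : Prop :=
  ∃ Q, IsCriticalPt φ Q ∧ IsPeriodicPoint φ Q ∧ ∃ n, φ.toFun^[n] Q = P

/-- The cardinality `|S|` of the set of places `S` consisting of all archimedean places
together with the finite places in `T`. -/
def sCard (K : Type*) [Field K] [NumberField K] (T : Finset (HeightOneSpectrum (𝓞 K))) : ℕ :=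
  T.card + Fintype.card (InfinitePlace K)

/-- `B(s) = 2^{16 s}`. -/
def Bconst (s : ℕ) : ℕ := 2 ^ (16 * s)

/-- `C(n,s) = e^{(6n)^{3n} (n s + 1 - n)}`. -/
def Cconst (n s : ℕ) : ℝ := Real.exp ((6 * n : ℝ) ^ (3 * n) * (n * s + 1 - n))

/-- `CV(d,s) = (3B(s)+13)d + 27B(s) + C(5,s) + 6C(3,s) + 32`. -/
def CVconst (d s : ℕ) : ℝ :=
  (3 * (Bconst s : ℝ) + 13) * d + 27 * (Bconst s : ℝ) + Cconst 5 s + 6 * Cconst 3 s + 32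

/-- `L₁(d,s) = (d-1)(1 + d(1 + B(s)))`. -/
def L1const (d s : ℕ) : ℕ := (d - 1) * (1 + d * (1 + Bconst s))

/-- `L₂(d,s) = max{(2(C(3,s)+2)+1)d + 1, (d-1)(1 + B(s)(B(s) + C(3,s) + 3))}`. -/
def L2const (d s : ℕ) : ℝ :=
  max ((2 * (Cconst 3 s + 2) + 1) * d + 1)
    (((d : ℝ) - 1) * (1 + (Bconst s : ℝ) * ((Bconst s : ℝ) + Cconst 3 s + 3)))

/-- `L₃(d,s) = ((1 + 3B(s))B(s) + 1)(d-1)`. -/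
def L3const (d s : ℕ) : ℕ := ((1 + 3 * Bconst s) * Bconst s + 1) * (d - 1)

/-- `L₄(d,s) = (C(3,s) + 3)(d-1)`. -/
def L4const (d s : ℕ) : ℝ := (Cconst 3 s + 3) * ((d : ℝ) - 1)

end

/-!
In homogeneous coordinates a map with good reduction at `v` does not expand the `v`-adic chordal
distance. Let `u` be non-periodic with `c = φ³(u)` of exact period `3`, and let `k` steps, with `k`
prime to `3`, lead from `q` to `u` and from `u` into the cycle. Comparing `φᵏ` with `φ³` shows that,
outside `S`, the point `q` is equidistant from `u`, `c` and `φᵏ(c)`. Hence the valuations outside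
`S` of `x` and `1 - x`, where `x` is the cross-ratio of `u`, `c`, `φᵏ(c)` and `q`, do not depend
on `q`, and the theorem of Beukers and Schlickewei on `x + y = 1` leaves at most `B(|S|) - 1` such
`q`. Every tail point reaches a last non-periodic point `t`, of which there are at most `3(d - 1)`.
Splitting the points above `t` by the number of steps modulo `3`, and for multiples of `3` passing
through the point just before `t`, bounds their number by `B(|S|)²`.

For `x + y = 1`, write solutions as triples `u` with zero sum. The residues of
`∏ᵢ (t - αᵢ) ^ (-nᵢ)`, where the differences of the `αᵢ` are the `uᵢ`, give Padé approximants built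
from powers of the `uᵢ`. Consecutive ones are independent, so the product formula applied to one of
them and a second solution yields a gap principle: large heights grow geometrically among solutions
that are smallest at the same coordinates and in similar proportions over the places of `S`.
Solutions of small height are separated by the product formula for their difference, and the
pigeonhole principle gives the constant `2 ^ (16 |S|)`.
-/

/-! ### Residues and Padé approximants -/

namespace PadeResidue

noncomputable section

variable {K ι : Type*} [Field K]

/-- The power series expansion of `1 / (t + u)` at `t = 0`. -/
def invShift (u : K) : PowerSeries K := (PowerSeries.X + PowerSeries.C u)⁻¹

lemma add_mul_invShift {u : K} (hu : u ≠ 0) :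
    (PowerSeries.X + PowerSeries.C u) * invShift u = 1 :=
  PowerSeries.mul_inv_cancel _ (by simpa using hu)

lemma coeff_invShift_pow_succ {u : K} (hu : u ≠ 0) (p n : ℕ) :
    PowerSeries.coeff n (invShift u ^ (p + 1)) =
      (-1) ^ n * u⁻¹ ^ (p + 1 + n) * (p + n).choose p := by
  have geometric : invShift u =
      PowerSeries.C u⁻¹ * PowerSeries.rescale (-u⁻¹) (PowerSeries.mk 1) := by
    rw [invShift, PowerSeries.inv_eq_iff_mul_eq_one (by simpa using hu), mul_comm]
    have hX : (PowerSeries.X + PowerSeries.C u) * PowerSeries.C u⁻¹ =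
        PowerSeries.rescale (-u⁻¹) (1 - PowerSeries.X) := by
      rw [add_mul, ← map_mul, mul_inv_cancel₀ hu, map_sub, map_one, PowerSeries.rescale_X, map_neg,
        map_one]
      ring
    rw [← mul_assoc, hX, mul_comm, ← map_mul, PowerSeries.mk_one_mul_one_sub_eq_one, map_one]
  rw [geometric, mul_pow, ← map_pow, ← map_pow, PowerSeries.mk_one_pow_eq_mk_choose_add,
    PowerSeries.coeff_C_mul, PowerSeries.coeff_rescale, PowerSeries.coeff_mk, neg_pow]
  ring

lemma derivative_prod_invShift_pow (s : Finset ι) (u : ι → K) (n : ι → ℕ) :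
    PowerSeries.derivative K (∏ j ∈ s, invShift (u j) ^ n j) =
      -∑ j ∈ s, (n j : PowerSeries K) * (invShift (u j) * ∏ i ∈ s, invShift (u i) ^ n i) := by
  have hpow (v : K) (k : ℕ) : PowerSeries.derivative K (invShift v ^ k) =
      -((k : PowerSeries K) * (invShift v * invShift v ^ k)) := by
    rcases k with _ | k
    · simp
    · rw [Derivation.leibniz_pow, invShift, PowerSeries.derivative_inv']
      simp only [map_add, PowerSeries.derivative_X, PowerSeries.derivative_C, nsmul_eq_mul,
        smul_eq_mul, add_tsub_cancel_right]
      ring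
  classical
  induction s using Finset.induction_on with
  | empty => simp
  | insert a s ha ih =>
    rw [Finset.prod_insert ha, Derivation.leibniz, ih, hpow, Finset.sum_insert ha, smul_eq_mul,
      smul_eq_mul, mul_neg, Finset.mul_sum]
    simp only [mul_left_comm (invShift (u a) ^ n a)]
    ring

lemma exists_eq_add_single [DecidableEq ι] {n : ι → ℕ} {l : ι} (hl : n l ≠ 0) :
    ∃ m : ι → ℕ, n = m + Pi.single l 1 := by
  refine ⟨n - Pi.single l 1, (tsub_add_cancel_of_le fun i => ?_).symm⟩
  rcases eq_or_ne i l with rfl | hil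
  · simpa using Nat.one_le_iff_ne_zero.mpr hl
  · simp [hil]

variable [Fintype ι] [DecidableEq ι] (α : ι → K) (n : ι → ℕ)

/-- The expansion at `t = α k` of the factors of `∏ i, (t - α i) ^ (-n i)` that are regular
there, for pairwise distinct `α i`. -/
def regularPart (k : ι) : PowerSeries K :=
  ∏ j ∈ Finset.univ.erase k, invShift (α k - α j) ^ n j

/-- The residue at `t = α k` of `∏ i, (t - α i) ^ (-n i)`, for pairwise distinct `α i`. The factor
`X` makes it vanish when `n k = 0`. -/
def residue (k : ι) : K := PowerSeries.coeff (n k) (PowerSeries.X * regularPart α n k)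

variable {α n}

lemma residue_eq_zero_of_exponent_eq_zero {k : ι} (hk : n k = 0) : residue α n k = 0 := by
  simp [residue, hk]

lemma residue_of_exponent_eq_succ {k : ι} {m : ℕ} (hk : n k = m + 1) :
    residue α n k = PowerSeries.coeff m (regularPart α n k) := by
  rw [residue, hk, PowerSeries.coeff_succ_X_mul]

lemma regularPart_add_single_self (k : ι) :
    regularPart α (n + Pi.single k 1) k = regularPart α n k :=
  Finset.prod_congr rfl fun j hj => by simp [Finset.ne_of_mem_erase hj]

lemma regularPart_add_single_of_ne {i k : ι} (hik : i ≠ k) :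
    regularPart α (n + Pi.single i 1) k = invShift (α k - α i) * regularPart α n k := by
  have hi : i ∈ Finset.univ.erase k := by simpa using hik
  rw [regularPart, regularPart, ← Finset.mul_prod_erase _ _ hi, ← Finset.mul_prod_erase _ _ hi,
    ← mul_assoc, ← pow_succ']
  congr 1
  · simp
  · exact Finset.prod_congr rfl fun j hj => by simp [Finset.ne_of_mem_erase hj]

lemma residue_add_single_self (k : ι) :
    residue α (n + Pi.single k 1) k = PowerSeries.coeff (n k) (regularPart α n k) := by
  rw [residue_of_exponent_eq_succ (m := n k) (by simp), regularPart_add_single_self]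

lemma residue_add_single_of_ne {i k : ι} (hik : i ≠ k) :
    residue α (n + Pi.single i 1) k =
      PowerSeries.coeff (n k) (PowerSeries.X * (invShift (α k - α i) * regularPart α n k)) := by
  rw [residue, regularPart_add_single_of_ne hik]
  simp [hik.symm]

private lemma sub_mul_residue_of_pole (hα : α.Injective) {j k : ι} (hjk : j ≠ k) :
    (α k - α j) * residue α (n + Pi.single k 1 + Pi.single j 1) k =
      residue α (n + Pi.single k 1) k - residue α (n + Pi.single j 1) k := by
  have h : PowerSeries.C (α k - α j) * (invShift (α k - α j) * regularPart α n k) =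
      regularPart α n k - PowerSeries.X * (invShift (α k - α j) * regularPart α n k) := by
    linear_combination
      regularPart α n k * add_mul_invShift (sub_ne_zero.mpr (hα.ne hjk.symm))
  have hcoeff := congrArg (PowerSeries.coeff (n k)) h
  rw [PowerSeries.coeff_C_mul, map_sub] at hcoeff
  rw [residue_add_single_of_ne (n := n + Pi.single k 1) hjk, residue_add_single_of_ne (n := n) hjk,
    residue_add_single_self, regularPart_add_single_self, ← hcoeff, Pi.add_apply, Pi.single_eq_same,
    PowerSeries.coeff_succ_X_mul]

/-- Comes from `(α i - α j) / ((t - α i) (t - α j)) = 1 / (t - α i) - 1 / (t - α j)`. -/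
lemma sub_mul_residue_add_single_add_single (hα : α.Injective) (n : ι → ℕ) (i j k : ι) :
    (α i - α j) * residue α (n + Pi.single i 1 + Pi.single j 1) k =
      residue α (n + Pi.single i 1) k - residue α (n + Pi.single j 1) k := by
  rcases eq_or_ne i j with rfl | hij
  · simp
  rcases eq_or_ne i k with rfl | hik
  · exact sub_mul_residue_of_pole hα hij.symm
  rcases eq_or_ne j k with rfl | hjk
  · rw [add_right_comm, ← neg_sub (α j), neg_mul, sub_mul_residue_of_pole hα hij, neg_sub]
  have h : PowerSeries.C (α i - α j) *
      (PowerSeries.X * (invShift (α k - α j) * (invShift (α k - α i) * regularPart α n k))) =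
      PowerSeries.X * (invShift (α k - α i) * regularPart α n k) -
        PowerSeries.X * (invShift (α k - α j) * regularPart α n k) := by
    have hi := add_mul_invShift (sub_ne_zero.mpr (hα.ne hik.symm))
    have hj := add_mul_invShift (sub_ne_zero.mpr (hα.ne hjk.symm))
    simp only [map_sub] at hi hj ⊢
    linear_combination PowerSeries.X * regularPart α n k *
      (invShift (α k - α i) * hj - invShift (α k - α j) * hi)
  rw [residue_add_single_of_ne hik, residue_add_single_of_ne hjk, residue_add_single_of_ne hjk,
    regularPart_add_single_of_ne hik, ← map_sub, ← h, PowerSeries.coeff_C_mul]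
  simp [hik.symm]

lemma coeff_X_mul_derivative (f : PowerSeries K) (m : ℕ) :
    PowerSeries.coeff m (PowerSeries.X * PowerSeries.derivative K f) =
      m * PowerSeries.coeff m f := by
  rcases m with _ | m
  · simp
  · rw [PowerSeries.coeff_succ_X_mul, PowerSeries.coeff_derivative]
    push_cast
    ring

/-- The derivative of `∏ i, (t - α i) ^ (-n i)` has no residues. -/
lemma sum_mul_residue_add_single (α : ι → K) (n : ι → ℕ) (k : ι) :
    ∑ i, (n i : K) * residue α (n + Pi.single i 1) k = 0 := by
  have hderiv := coeff_X_mul_derivative (regularPart α n k) (n k)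
  rw [regularPart, derivative_prod_invShift_pow _ (fun j => α k - α j), ← regularPart, mul_neg,
    Finset.mul_sum, map_neg, map_sum] at hderiv
  rw [← Finset.add_sum_erase _ _ (Finset.mem_univ k), residue_add_single_self, ← hderiv,
    neg_add_eq_zero]
  refine Finset.sum_congr rfl fun j hj => ?_
  rw [residue_add_single_of_ne (Finset.ne_of_mem_erase hj), mul_left_comm,
    ← map_natCast PowerSeries.C, PowerSeries.coeff_C_mul]

/-- The residues of `(t - α k) ∏ i, (t - α i) ^ (-n i)` vanish on derivatives as well. -/
lemma sum_mul_sub_mul_residue_add_single (hα : α.Injective) (n : ι → ℕ) (hn : n ≠ 0) (j k : ι) :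
    ∑ i, (n i : K) * (α j - α i) * residue α (n + Pi.single i 1) k =
      (∑ i, (n i : K) - 1) * residue α n k := by
  obtain ⟨l, hl⟩ := Function.ne_iff.mp hn
  obtain ⟨m, rfl⟩ := exists_eq_add_single hl
  have hsplit (i : ι) : (((m + Pi.single l 1 : ι → ℕ) i : ℕ) : K) * (α j - α i) *
      residue α (m + Pi.single l 1 + Pi.single i 1) k =
      (α j - α l) * (((m + Pi.single l 1 : ι → ℕ) i : ℕ) *
        residue α (m + Pi.single l 1 + Pi.single i 1) k) +
      (m i * residue α (m + Pi.single l 1) k - m i * residue α (m + Pi.single i 1) k) := by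
    have h := sub_mul_residue_add_single_add_single hα m l i k
    rcases eq_or_ne i l with rfl | hil
    · ring
    · simp only [Pi.add_apply, Pi.single_eq_of_ne hil, add_zero]
      linear_combination (m i : K) * h
  rw [Finset.sum_congr rfl fun i _ => hsplit i, Finset.sum_add_distrib, ← Finset.mul_sum,
    sum_mul_residue_add_single, Finset.sum_sub_distrib, sum_mul_residue_add_single,
    ← Finset.sum_mul]
  have hcard : ∑ i, (((m + Pi.single l 1 : ι → ℕ) i : ℕ) : K) = ∑ i, (m i : K) + 1 := by
    simp [Finset.sum_add_distrib, Pi.single_apply]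
  rw [hcard]
  ring

end

end PadeResidue

namespace PadeResidue

noncomputable section

variable {K ι : Type*} [Field K]

section Sum

variable [Fintype ι] [DecidableEq ι] {α : ι → K}

lemma sum_residue_single (α : ι → K) (k : ι) (c : ℕ) :
    ∑ l, residue α (Pi.single k c) l = if c = 1 then 1 else 0 := by
  have hreg : regularPart α (Pi.single k c) k = 1 :=
    Finset.prod_eq_one fun j hj => by simp [Finset.ne_of_mem_erase hj]
  rw [Fintype.sum_eq_single k fun l hl => residue_eq_zero_of_exponent_eq_zero (by simp [hl]),
    residue, hreg]
  simp [PowerSeries.coeff_X]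

lemma exists_eq_add_single_add_single {n : ι → ℕ} (hn : n ≠ 0)
    (hsingle : ∀ k, n ≠ Pi.single k (∑ i, n i)) :
    ∃ (m : ι → ℕ) (i j : ι), i ≠ j ∧ n = m + Pi.single i 1 + Pi.single j 1 := by
  obtain ⟨j, hj⟩ := Function.ne_iff.mp hn
  obtain ⟨i, hij, hi⟩ : ∃ i, i ≠ j ∧ n i ≠ 0 := by
    by_contra! hzero
    refine hsingle j (funext fun i => ?_)
    rw [Fintype.sum_eq_single j hzero]
    rcases eq_or_ne i j with rfl | hij
    · simp
    · simp [hij, hzero i hij]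
  obtain ⟨m, rfl⟩ := exists_eq_add_single hj
  obtain ⟨m, rfl⟩ := exists_eq_add_single (n := m) (l := i) (by simpa [hij] using hi)
  exact ⟨m, i, j, hij, rfl⟩

/-- Both sides satisfy the recursion given by `sub_mul_residue_add_single_add_single`. -/
lemma sum_residue_of_sum_eq_succ (hα : α.Injective) {s : ℕ} {n : ι → ℕ}
    (hs : ∑ i, n i = s + 1) : ∑ k, residue α n k = if s = 0 then 1 else 0 := by
  by_cases hsingle : ∃ k, n = Pi.single k (∑ i, n i)
  · obtain ⟨k, hk⟩ := hsingle
    rw [hk, sum_residue_single, hs]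
    simp
  have hn : n ≠ 0 := by rintro rfl; simp at hs
  obtain ⟨m, i, j, hij, rfl⟩ := exists_eq_add_single_add_single hn (not_exists.mp hsingle)
  simp only [Pi.add_apply, Finset.sum_add_distrib, Finset.sum_pi_single', Finset.mem_univ,
    if_true] at hs
  obtain ⟨s, rfl⟩ : ∃ t, s = t + 1 := ⟨∑ k, m k, by omega⟩
  have hpred (l : ι) : ∑ k, residue α (m + Pi.single l 1) k = if s = 0 then 1 else 0 :=
    sum_residue_of_sum_eq_succ hα (by simp [Finset.sum_add_distrib]; omega)
  have hsum := Finset.sum_congr rfl fun k (_ : k ∈ Finset.univ) =>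
    sub_mul_residue_add_single_add_single hα m i j k
  rw [← Finset.mul_sum, Finset.sum_sub_distrib, hpred i, hpred j, sub_self] at hsum
  simpa [sub_ne_zero.mpr (hα.ne hij)] using hsum

lemma sum_residue_eq_zero (hα : α.Injective) {n : ι → ℕ} (hn : 2 ≤ ∑ i, n i) :
    ∑ k, residue α n k = 0 := by
  obtain ⟨s, hs⟩ := Nat.exists_eq_add_of_le' hn
  simpa using sum_residue_of_sum_eq_succ hα (s := s + 1) (by omega)

end Sum

section Minor

/-- The determinant of the residues at `α 0` and `α 1` for two exponent vectors. -/
def residueMinor (α : Fin 3 → K) (n m : Fin 3 → ℕ) : K :=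
  residue α n 0 * residue α m 1 - residue α n 1 * residue α m 0

variable {α : Fin 3 → K}

lemma residueMinor_add_single_comm (hα : α.Injective) (n : Fin 3 → ℕ) (i j : Fin 3) :
    residueMinor α (n + Pi.single i 1 + Pi.single j 1) (n + Pi.single i 1) =
      residueMinor α (n + Pi.single i 1 + Pi.single j 1) (n + Pi.single j 1) := by
  have h := sub_mul_residue_add_single_add_single hα n i j
  simp only [residueMinor]
  linear_combination residue α (n + Pi.single i 1 + Pi.single j 1) 1 * h 0 -
    residue α (n + Pi.single i 1 + Pi.single j 1) 0 * h 1

@[to_additive]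
lemma prod_fin_three_rotate {M : Type*} [CommMonoid M] (f : Fin 3 → M) (i : Fin 3) :
    ∏ j, f j = f i * f (i + 1) * f (i + 2) := by
  rw [← Equiv.prod_comp (Equiv.addLeft i) f]
  simp [Fin.prod_univ_three]

lemma residueMinor_add_single_add_single (hα : α.Injective) {n : Fin 3 → ℕ} (hn : n ≠ 0)
    (i : Fin 3) :
    (n i + 1) * (α i - α (i + 1)) * (α i - α (i + 2)) *
        residueMinor α (n + Pi.single i 1 + Pi.single i 1) (n + Pi.single i 1) =
      (∑ j, (n j : K) - 1) * residueMinor α (n + Pi.single i 1) n := by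
  have hrec (k : Fin 3) : (n i + 1) * (α i - α (i + 1)) * (α i - α (i + 2)) *
        residue α (n + Pi.single i 1 + Pi.single i 1) k + (∑ j, (n j : K) - 1) * residue α n k +
      (n (i + 1) * (α i - α (i + 2)) + n (i + 2) * (α i - α (i + 1)) +
        n i * (2 * α i - α (i + 1) - α (i + 2))) * residue α (n + Pi.single i 1) k = 0 := by
    have hD := sum_mul_residue_add_single α n k
    have hD' := sum_mul_residue_add_single α (n + Pi.single i 1) k
    have hR₁ := sub_mul_residue_add_single_add_single hα n i (i + 1) k
    have hR₂ := sub_mul_residue_add_single_add_single hα n i (i + 2) k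
    rw [sum_fin_three_rotate _ i] at hD hD'
    rw [← sum_mul_sub_mul_residue_add_single hα n hn i k, sum_fin_three_rotate _ i]
    have h₁ : i + 1 ≠ i := by simp
    have h₂ : i + 2 ≠ i := by simp
    simp only [Pi.add_apply, Pi.single_eq_same, Pi.single_eq_of_ne h₁, Pi.single_eq_of_ne h₂,
      add_zero, Nat.cast_add, Nat.cast_one] at hD'
    linear_combination (α i - α (i + 1)) * (α i - α (i + 2)) * hD' -
      n (i + 1) * (α i - α (i + 2)) * hR₁ - n (i + 2) * (α i - α (i + 1)) * hR₂ +
      (2 * α i - α (i + 1) - α (i + 2)) * hD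
  simp only [residueMinor]
  linear_combination residue α (n + Pi.single i 1) 1 * hrec 0 -
    residue α (n + Pi.single i 1) 0 * hrec 1

lemma add_one_sub_single_add_single (n : Fin 3 → ℕ) (i : Fin 3) :
    n + (1 - Pi.single i 1) + Pi.single i 1 = n + 1 := by
  rw [add_assoc, tsub_add_cancel_of_le]
  intro j
  rcases eq_or_ne j i with rfl | hj <;> simp [*]

lemma residueMinor_add_one_comm (hα : α.Injective) (n : Fin 3 → ℕ) (i j : Fin 3) :
    residueMinor α (n + 1) (n + (1 - Pi.single i 1)) =
      residueMinor α (n + 1) (n + (1 - Pi.single j 1)) := by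
  rcases eq_or_ne i j with rfl | hij
  · rfl
  obtain ⟨m, hm⟩ := exists_eq_add_single (n := n + (1 - Pi.single i 1)) (l := j)
    (by simp [hij.symm])
  have hn : n + 1 = m + Pi.single j 1 + Pi.single i 1 := by
    rw [← hm, add_one_sub_single_add_single]
  have hm' : n + (1 - Pi.single j 1) = m + Pi.single i 1 := by
    apply add_right_cancel (b := Pi.single j 1)
    rw [add_one_sub_single_add_single, hn, add_right_comm]
  rw [hm, hm', hn, residueMinor_add_single_comm hα]

lemma residue_of_exponent_eq_one {k : Fin 3} {n : Fin 3 → ℕ} (hk : n k = 1) :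
    residue α n k = ∏ j ∈ Finset.univ.erase k, (α k - α j)⁻¹ ^ n j := by
  rw [residue_of_exponent_eq_succ (m := 0) hk, regularPart]
  simp [invShift, map_prod]

lemma residueMinor_one (hα : α.Injective) (i : Fin 3) :
    residueMinor α 1 (1 - Pi.single i 1) ≠ 0 := by
  have h := residueMinor_add_one_comm hα 0 i 0
  simp only [zero_add] at h
  rw [h, residueMinor, residue_eq_zero_of_exponent_eq_zero (n := 1 - Pi.single 0 1) (k := 0) rfl,
    mul_zero, sub_zero, residue_of_exponent_eq_one rfl, residue_of_exponent_eq_one rfl]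
  refine mul_ne_zero ?_ ?_ <;>
    exact Finset.prod_ne_zero_iff.mpr fun j hj => pow_ne_zero _ <| inv_ne_zero <|
      sub_ne_zero.mpr (hα.ne (Finset.ne_of_mem_erase hj).symm)

lemma residueMinor_add_one_ne_zero [CharZero K] (hα : α.Injective) (n : Fin 3 → ℕ) (i : Fin 3) :
    residueMinor α (n + 1) (n + (1 - Pi.single i 1)) ≠ 0 := by
  by_cases hn : n = 0
  · simpa [hn] using residueMinor_one hα i
  obtain ⟨l, hl⟩ := Function.ne_iff.mp hn
  obtain ⟨m, rfl⟩ := exists_eq_add_single hl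
  have ih := residueMinor_add_one_ne_zero hα m l
  rw [← add_one_sub_single_add_single m l] at ih
  have hm : m + (1 - Pi.single l 1) ≠ 0 := fun h => by simpa using congrFun h (l + 1)
  have hstep := residueMinor_add_single_add_single hα hm l
  have hsum : ∑ j, ((m + (1 - Pi.single l 1) : Fin 3 → ℕ) j : K) - 1 ≠ 0 := by
    have hnat : ∑ j, (m + (1 - Pi.single l 1) : Fin 3 → ℕ) j =
        m l + m (l + 1) + m (l + 2) + 1 + 1 := by
      rw [sum_fin_three_rotate _ l]
      simp
      ring
    rw [← Nat.cast_sum, hnat, Nat.cast_succ, add_sub_cancel_right]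
    exact_mod_cast Nat.succ_ne_zero (m l + m (l + 1) + m (l + 2))
  rw [residueMinor_add_one_comm hα _ i l, add_right_comm m _ 1,
    add_right_comm m _ (1 - Pi.single l 1), ← add_one_sub_single_add_single m l]
  exact right_ne_zero_of_mul (hstep ▸ mul_ne_zero hsum ih)
termination_by ∑ j, n j
decreasing_by subst_vars; simp [Finset.sum_add_distrib]

lemma residueMinor_add_single_ne_zero [CharZero K] (hα : α.Injective) (n : Fin 3 → ℕ) (i : Fin 3) :
    residueMinor α (n + 1 + Pi.single i 1) (n + 1) ≠ 0 := by
  have h := residueMinor_add_one_ne_zero hα (n + Pi.single i 1) i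
  rwa [add_right_comm n _ 1, add_right_comm n _ (1 - Pi.single i 1),
    add_one_sub_single_add_single] at h

end Minor

end

end PadeResidue

/-! ### Zero-sum triples and absolute values -/

noncomputable section AbsoluteValue

variable {K : Type*} [Field K] (f : AbsoluteValue K ℝ)

/-- A constant `C` with `f (x + y) ≤ C * max (f x) (f y)`: it is `1` for a nonarchimedean absolute
value and `2` in general. -/
def triangleConst : ℝ := if IsNonarchimedean f then 1 else 2

variable {f}

lemma triangleConst_eq_one (hf : IsNonarchimedean f) : triangleConst f = 1 := if_pos hf

variable (f)

lemma one_le_triangleConst : 1 ≤ triangleConst f := by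
  rw [triangleConst]
  split_ifs <;> norm_num

lemma triangleConst_le_two : triangleConst f ≤ 2 := by
  rw [triangleConst]
  split_ifs <;> norm_num

variable {f}

lemma apply_add_le_triangleConst_mul {x y : K} {B : ℝ} (hx : f x ≤ B) (hy : f y ≤ B) :
    f (x + y) ≤ triangleConst f * B := by
  rw [triangleConst]
  split_ifs with hf
  · rw [one_mul]
    exact (hf x y).trans (max_le hx hy)
  · linarith [f.add_le x y]

lemma apply_natCast_le_natCast (n : ℕ) : f (n : K) ≤ n := by
  induction n with
  | zero => simp
  | succ n ih =>
    push_cast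
    linarith [f.add_le n 1, f.map_one]

lemma apply_sum_natCast_mul_le {ι : Type*} {s : Finset ι} {c : ι → ℕ} {a : ι → K} {B : ℝ} {k : ℕ}
    (hs : s.Nonempty) (hc : ∑ i ∈ s, c i ≤ 2 ^ k) (ha : ∀ i ∈ s, f (a i) ≤ B) :
    f (∑ i ∈ s, c i * a i) ≤ triangleConst f ^ k * B := by
  have hB : 0 ≤ B := hs.elim fun i hi => (f.nonneg _).trans (ha i hi)
  rw [triangleConst]
  split_ifs with hf
  · rw [one_pow, one_mul]
    refine (hf.apply_sum_le_sup hs).trans (Finset.sup'_le _ _ fun i hi => ?_)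
    rw [map_mul]
    exact (mul_le_of_le_one_left (f.nonneg _) hf.apply_natCast_le_one).trans (ha i hi)
  · calc f (∑ i ∈ s, c i * a i) ≤ ∑ i ∈ s, f (c i * a i) := f.sum_le _ _
      _ ≤ ∑ i ∈ s, c i * B := Finset.sum_le_sum fun i hi => by
          rw [map_mul]
          exact mul_le_mul (apply_natCast_le_natCast _) (ha i hi) (f.nonneg _) (Nat.cast_nonneg _)
      _ = (∑ i ∈ s, c i : ℕ) * B := by rw [Nat.cast_sum, Finset.sum_mul]
      _ ≤ 2 ^ k * B := mul_le_mul_of_nonneg_right (mod_cast hc) hB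

end AbsoluteValue

namespace PadeResidue

open Finset.HasAntidiagonal (antidiagonal mem_antidiagonal)

lemma sum_antidiagonal_choose_mul_choose (p q r : ℕ) :
    ∑ ij ∈ antidiagonal p, (q + ij.1).choose q * (r + ij.2).choose r =
      (q + r + 1 + p).choose (q + r + 1) := by
  have h : (PowerSeries.mk 1 : PowerSeries ℤ) ^ (q + 1) * PowerSeries.mk 1 ^ (r + 1) =
      PowerSeries.mk 1 ^ (q + r + 1 + 1) := by
    rw [← pow_add]
    congr 1
    ring
  have hcoeff := congrArg (PowerSeries.coeff p) h
  simp only [PowerSeries.coeff_mul, PowerSeries.mk_one_pow_eq_mk_choose_add,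
    PowerSeries.coeff_mk] at hcoeff
  exact_mod_cast hcoeff

variable {K : Type*} [Field K] {α : Fin 3 → K}

lemma regularPart_fin_three (α : Fin 3 → K) (n : Fin 3 → ℕ) (k : Fin 3) :
    regularPart α n k =
      invShift (α k - α (k + 1)) ^ n (k + 1) * invShift (α k - α (k + 2)) ^ n (k + 2) := by
  have hk : Finset.univ.erase k = {k + 1, k + 2} := by
    ext j
    fin_cases j <;> fin_cases k <;> decide
  rw [regularPart, hk, Finset.prod_pair (by simp)]

lemma residue_add_one_mul_pow_mul_pow (hα : α.Injective) (n : Fin 3 → ℕ) (k : Fin 3) :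
    residue α (n + 1) k * ((α k - α (k + 1)) ^ (n k + n (k + 1) + 1) *
        (α k - α (k + 2)) ^ (n k + n (k + 2) + 1)) =
      (-1) ^ n k * ∑ ij ∈ antidiagonal (n k),
        (((n (k + 1) + ij.1).choose (n (k + 1)) * (n (k + 2) + ij.2).choose (n (k + 2)) : ℕ) : K) *
          ((α k - α (k + 1)) ^ ij.2 * (α k - α (k + 2)) ^ ij.1) := by
  have h₁ : α k - α (k + 1) ≠ 0 := sub_ne_zero.mpr (hα.ne (by simp))
  have h₂ : α k - α (k + 2) ≠ 0 := sub_ne_zero.mpr (hα.ne (by simp))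
  rw [residue_of_exponent_eq_succ (n := n + 1) rfl, regularPart_fin_three, PowerSeries.coeff_mul,
    Finset.sum_mul, Finset.mul_sum]
  refine Finset.sum_congr rfl fun ij hij => ?_
  rw [mem_antidiagonal] at hij
  simp only [Pi.add_apply, Pi.one_apply, coeff_invShift_pow_succ h₁, coeff_invShift_pow_succ h₂,
    ← hij, inv_pow, Nat.cast_mul]
  field_simp
  ring

lemma apply_residue_add_one_mul_le (f : AbsoluteValue K ℝ) (hα : α.Injective) (n : Fin 3 → ℕ)
    (k : Fin 3) {B : ℝ} (h₁ : f (α k - α (k + 1)) ≤ B) (h₂ : f (α k - α (k + 2)) ≤ B) :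
    f (residue α (n + 1) k) * (f (α k - α (k + 1)) ^ (n k + n (k + 1) + 1) *
        f (α k - α (k + 2)) ^ (n k + n (k + 2) + 1)) ≤
      triangleConst f ^ (∑ j, n j + 1) * B ^ n k := by
  have hB : 0 ≤ B := (f.nonneg _).trans h₁
  rw [← map_pow, ← map_pow, ← map_mul, ← map_mul, residue_add_one_mul_pow_mul_pow hα, map_mul,
    map_pow, f.map_neg, f.map_one, one_pow, one_mul]
  refine apply_sum_natCast_mul_le ⟨(0, n k), by simp⟩ ?_ fun ij hij => ?_
  · rw [sum_antidiagonal_choose_mul_choose, sum_fin_three_rotate n k]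
    exact (Nat.choose_le_two_pow _ _).trans_eq (by ring)
  · rw [map_mul, map_pow, map_pow, ← mem_antidiagonal.mp hij, pow_add, mul_comm (B ^ _)]
    gcongr

end PadeResidue

/-- A triple of nonzero elements with sum zero, that is, the solution `-u 0 / u 2` of the unit
equation `x + y = 1` in homogeneous coordinates. -/
structure ZeroSumTriple {K : Type*} [Field K] (u : Fin 3 → K) : Prop where
  ne_zero : ∀ i, u i ≠ 0
  sum_eq_zero : ∑ i, u i = 0

namespace ZeroSumTriple

noncomputable section

variable {K : Type*} [Field K] {u w : Fin 3 → K}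

lemma rotate_sum_eq_zero (hu : ZeroSumTriple u) (i : Fin 3) : u i + u (i + 1) + u (i + 2) = 0 := by
  rw [← PadeResidue.sum_fin_three_rotate, hu.sum_eq_zero]

/-- The determinant of the first two coordinates of `u` and `w`. For triples of sum zero it can be
computed from any two cyclically consecutive coordinates. -/
def cross (u w : Fin 3 → K) : K := u 0 * w 1 - u 1 * w 0

lemma cross_eq (hu : ∑ i, u i = 0) (hw : ∑ i, w i = 0) (i : Fin 3) :
    cross u w = u i * w (i + 1) - u (i + 1) * w i := by
  rw [Fin.sum_univ_three] at hu hw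
  fin_cases i
  · rfl
  · simp only [cross, Fin.mk_one, Fin.isValue, Fin.reduceAdd]
    linear_combination w 1 * hu - u 1 * hw
  · simp only [cross, Fin.reduceFinMk, Fin.isValue, Fin.reduceAdd]
    linear_combination u 0 * hw - w 0 * hu

section Pade

/-- Three points of the affine line with differences `u i`, in cyclic order. -/
def poles (u : Fin 3 → K) : Fin 3 → K := ![0, -u 2, u 1]

lemma poles_sub_poles_add_one (hu : ZeroSumTriple u) (i : Fin 3) :
    poles u i - poles u (i + 1) = u (i + 2) := by
  have h : u 0 + u 1 + u 2 = 0 := hu.rotate_sum_eq_zero 0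
  fin_cases i
  · simp [poles]
  · simp [poles]
    linear_combination -h
  · simp [poles]

lemma poles_sub_poles_add_two (hu : ZeroSumTriple u) (i : Fin 3) :
    poles u i - poles u (i + 2) = -u (i + 1) := by
  have h := hu.poles_sub_poles_add_one (i + 2)
  simp only [add_assoc, Fin.isValue, Fin.reduceAdd, add_zero] at h
  rw [← h, neg_sub]

lemma poles_injective (hu : ZeroSumTriple u) : (poles u).Injective := by
  intro i j hij
  have h : j = i ∨ j = i + 1 ∨ j = i + 2 := by
    fin_cases i <;> fin_cases j <;> simp
  rcases h with rfl | rfl | rfl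
  · rfl
  · exact absurd (hu.poles_sub_poles_add_one i) (by simp [hij, (hu.ne_zero _).symm])
  · exact absurd (hu.poles_sub_poles_add_two i) (by simp [hij, hu.ne_zero _])

/-- The Padé vector of `u`: the residues of `∏ i, (t - poles u i) ^ (-(n i + 1))`, multiplied by
their common denominator. -/
def padeVec (u : Fin 3 → K) (n : Fin 3 → ℕ) (i : Fin 3) : K :=
  (∏ j, u j ^ (n (j + 1) + n (j + 2) + 1)) * PadeResidue.residue (poles u) (n + 1) i

lemma sum_padeVec (hu : ZeroSumTriple u) (n : Fin 3 → ℕ) : ∑ i, padeVec u n i = 0 := by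
  have hn : 2 ≤ ∑ i, (n + 1) i := by
    simp [Finset.sum_add_distrib]
  simp only [padeVec]
  rw [← Finset.mul_sum, PadeResidue.sum_residue_eq_zero hu.poles_injective hn, mul_zero]

lemma exists_cross_padeVec_ne_zero [CharZero K] (hu : ZeroSumTriple u) (hw : w 0 ≠ 0)
    (n : Fin 3 → ℕ) (i : Fin 3) :
    cross (padeVec u n) w ≠ 0 ∨ cross (padeVec u (n + Pi.single i 1)) w ≠ 0 := by
  have cross_padeVec (m : Fin 3 → ℕ) : cross (padeVec u m) w =
      (∏ j, u j ^ (m (j + 1) + m (j + 2) + 1)) *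
        cross (PadeResidue.residue (poles u) (m + 1)) w := by
    simp only [cross, padeVec]
    ring
  have hprod (m : Fin 3 → ℕ) : ∏ j, u j ^ (m (j + 1) + m (j + 2) + 1) ≠ 0 :=
    Finset.prod_ne_zero_iff.mpr fun j _ => pow_ne_zero _ (hu.ne_zero j)
  by_contra! h
  simp only [cross_padeVec, mul_eq_zero, hprod, false_or] at h
  simp only [cross, sub_eq_zero] at h
  refine PadeResidue.residueMinor_add_single_ne_zero hu.poles_injective n i
    (mul_right_cancel₀ hw ?_)
  rw [PadeResidue.residueMinor, add_right_comm]
  linear_combination PadeResidue.residue (poles u) (n + Pi.single i 1 + 1) 0 * -h.1 +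
    PadeResidue.residue (poles u) (n + 1) 0 * h.2

lemma cross_padeVec_zero (hu : ZeroSumTriple u) (w : Fin 3 → K) :
    cross (padeVec u 0) w = -cross u w := by
  have hres (i : Fin 3) : padeVec u 0 i = -u i := by
    rw [padeVec, PadeResidue.residue_of_exponent_eq_succ (n := 0 + 1) rfl,
      PadeResidue.regularPart_fin_three, hu.poles_sub_poles_add_one, hu.poles_sub_poles_add_two,
      PadeResidue.prod_fin_three_rotate _ i]
    simp only [Pi.zero_apply, add_zero, zero_add, pow_one, Pi.one_apply, PadeResidue.invShift,
      PowerSeries.coeff_zero_eq_constantCoeff, map_mul, PowerSeries.constantCoeff_inv, map_add,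
      PowerSeries.constantCoeff_X, PowerSeries.constantCoeff_C]
    have h₁ := hu.ne_zero (i + 1)
    have h₂ := hu.ne_zero (i + 2)
    field_simp
  simp only [cross, hres]
  ring

end Pade
end
end ZeroSumTriple

namespace ZeroSumTriple

noncomputable section

variable {K : Type*} [Field K] (f : AbsoluteValue K ℝ) (u : Fin 3 → K) {w : Fin 3 → K}

/-- The contribution of the absolute value `f` to the height of `u`. -/
def maxAbs : ℝ := ⨆ i, f (u i)

/-- The index of a coordinate of `u` that is smallest for `f`. -/
def minIdx : Fin 3 := (Finite.exists_min fun i => f (u i)).choose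

/-- The total logarithmic deviation of the coordinates of `u` from the largest one. It is
essentially concentrated at the smallest coordinate. -/
def depth : ℝ := ∑ i, (Real.log (maxAbs f u) - Real.log (f (u i)))

variable {u}

lemma apply_le_maxAbs (i : Fin 3) : f (u i) ≤ maxAbs f u := Finite.le_ciSup (fun i => f (u i)) i

lemma apply_minIdx_le (j : Fin 3) : f (u (minIdx f u)) ≤ f (u j) :=
  (Finite.exists_min fun i => f (u i)).choose_spec j

lemma exists_ne_minIdx_apply_eq_maxAbs (u : Fin 3 → K) :
    ∃ l ≠ minIdx f u, f (u l) = maxAbs f u := by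
  obtain ⟨l, hl⟩ := exists_eq_ciSup_of_finite (f := fun i => f (u i))
  by_cases hmin : l = minIdx f u
  · refine ⟨l + 1, by simp [← hmin], (apply_le_maxAbs f _).antisymm ?_⟩
    rw [maxAbs, ← hl, hmin]
    exact apply_minIdx_le f _
  · exact ⟨l, hmin, hl⟩

variable {f}

lemma minIdx_congr (h : ∀ i, f (u i) = f (w i)) :
    minIdx f u = minIdx f w := by
  simp only [minIdx, h]

lemma depth_congr (h : ∀ i, f (u i) = f (w i)) :
    depth f u = depth f w := by
  simp only [depth, maxAbs, h]

lemma maxAbs_eq_one (h : ∀ i, f (u i) = 1) :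
    maxAbs f u = 1 := by
  simp [maxAbs, h]

lemma depth_eq_zero (h : ∀ i, f (u i) = 1) :
    depth f u = 0 := by
  simp [depth, maxAbs_eq_one h, h]

lemma apply_pos (hu : ZeroSumTriple u) (i : Fin 3) : 0 < f (u i) := f.pos (hu.ne_zero i)

lemma maxAbs_pos (hu : ZeroSumTriple u) : 0 < maxAbs f u :=
  (hu.apply_pos 0).trans_le (apply_le_maxAbs f 0)

lemma log_apply_le (hu : ZeroSumTriple u) (i : Fin 3) :
    Real.log (f (u i)) ≤ Real.log (maxAbs f u) :=
  Real.log_le_log (hu.apply_pos i) (apply_le_maxAbs f i)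

lemma depth_nonneg (hu : ZeroSumTriple u) : 0 ≤ depth f u :=
  Finset.sum_nonneg fun i _ => sub_nonneg.mpr (hu.log_apply_le i)

lemma eq_add_one_or_eq_add_two {i j : Fin 3} (h : j ≠ i) : j = i + 1 ∨ j = i + 2 := by
  revert h
  fin_cases i <;> fin_cases j <;> simp

lemma maxAbs_le_triangleConst_mul (hu : ZeroSumTriple u) {j : Fin 3} (hj : j ≠ minIdx f u) :
    maxAbs f u ≤ triangleConst f * f (u j) := by
  obtain ⟨l, hl, hmax⟩ := exists_ne_minIdx_apply_eq_maxAbs f u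
  rw [← hmax]
  rcases eq_or_ne l j with rfl | hlj
  · exact le_mul_of_one_le_left (f.nonneg _) (one_le_triangleConst f)
  · have hsum : u l = -(u (minIdx f u) + u j) := by
      have h := hu.rotate_sum_eq_zero (minIdx f u)
      rcases eq_add_one_or_eq_add_two hj with rfl | rfl <;>
        rcases eq_add_one_or_eq_add_two hl with rfl | rfl <;>
        first | exact absurd rfl hlj | linear_combination h
    rw [hsum, f.map_neg]
    exact apply_add_le_triangleConst_mul (apply_minIdx_le f j) le_rfl

lemma apply_minIdx_le_mul_exp (hu : ZeroSumTriple u) :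
    f (u (minIdx f u)) ≤ maxAbs f u * (triangleConst f * Real.exp (-depth f u)) := by
  have hC : 0 < triangleConst f := zero_lt_one.trans_le (one_le_triangleConst f)
  have hM : 0 < maxAbs f u := hu.maxAbs_pos
  have hlog {j : Fin 3} (hj : j ≠ minIdx f u) :
      Real.log (maxAbs f u) ≤ Real.log (triangleConst f) + Real.log (f (u j)) := by
    rw [← Real.log_mul hC.ne' (hu.apply_pos j).ne']
    exact Real.log_le_log hM (hu.maxAbs_le_triangleConst_mul hj)
  have hdepth : depth f u = _ := PadeResidue.sum_fin_three_rotate _ (minIdx f u)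
  obtain ⟨l, hl, hmax⟩ := exists_ne_minIdx_apply_eq_maxAbs f u
  rw [← Real.log_le_log_iff (hu.apply_pos _) (by positivity), Real.log_mul (by positivity)
    (by positivity), Real.log_mul (by positivity) (by positivity), Real.log_exp, hdepth]
  have hlogmax := congrArg Real.log hmax
  rcases eq_add_one_or_eq_add_two hl with rfl | rfl
  · linarith [hlog (j := minIdx f u + 2) (by simp)]
  · linarith [hlog (j := minIdx f u + 1) (by simp)]

section Pade

lemma apply_padeVec_le_mul_pow (hu : ZeroSumTriple u) (n : Fin 3 → ℕ) (i : Fin 3) :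
    f (padeVec u n i) ≤ triangleConst f ^ (∑ j, n j + 1) * maxAbs f u ^ n i *
      f (u i) ^ (n (i + 1) + n (i + 2) + 1) := by
  have h := PadeResidue.apply_residue_add_one_mul_le f hu.poles_injective n i
    (B := maxAbs f u) (by rw [hu.poles_sub_poles_add_one]; exact apply_le_maxAbs f _)
    (by rw [hu.poles_sub_poles_add_two, f.map_neg]; exact apply_le_maxAbs f _)
  rw [hu.poles_sub_poles_add_one, hu.poles_sub_poles_add_two, f.map_neg] at h
  rw [padeVec, PadeResidue.prod_fin_three_rotate _ i, map_mul, map_mul, map_mul, map_pow, map_pow,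
    map_pow]
  simp only [add_assoc, Fin.isValue, Fin.reduceAdd, add_zero] at h ⊢
  calc _ = f (u i) ^ (n (i + 1) + (n (i + 2) + 1)) * _ := by ring
    _ ≤ f (u i) ^ (n (i + 1) + (n (i + 2) + 1)) * _ :=
        mul_le_mul_of_nonneg_left h (pow_nonneg (f.nonneg _) _)
    _ = _ := by ring

lemma apply_padeVec_le (hu : ZeroSumTriple u) (n : Fin 3 → ℕ) (i : Fin 3) {M : ℕ}
    (hM : M ≤ n (i + 1) + n (i + 2) + 1) :
    f (padeVec u n i) ≤
      (triangleConst f * maxAbs f u) ^ (∑ j, n j + 1) * (f (u i) / maxAbs f u) ^ M := by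
  have hm : 0 < maxAbs f u := hu.maxAbs_pos
  have hC : 0 ≤ triangleConst f := zero_le_one.trans (one_le_triangleConst f)
  have hle : f (u i) / maxAbs f u ≤ 1 := div_le_one_of_le₀ (apply_le_maxAbs f i) hm.le
  have hnonneg : 0 ≤ f (u i) / maxAbs f u := div_nonneg (f.nonneg _) hm.le
  have hsum : ∑ j, n j + 1 = n i + (n (i + 1) + n (i + 2) + 1) := by
    rw [PadeResidue.sum_fin_three_rotate n i]
    ring
  calc f (padeVec u n i)
    _ ≤ triangleConst f ^ (∑ j, n j + 1) * maxAbs f u ^ n i *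
        f (u i) ^ (n (i + 1) + n (i + 2) + 1) := hu.apply_padeVec_le_mul_pow n i
    _ = (triangleConst f * maxAbs f u) ^ (∑ j, n j + 1) *
        (f (u i) / maxAbs f u) ^ (n (i + 1) + n (i + 2) + 1) := by
      rw [mul_pow, hsum, pow_add (maxAbs f u), div_pow]
      field_simp
    _ ≤ _ := by
      gcongr ?_ * ?_
      exact pow_le_pow_of_le_one hnonneg hle hM

lemma apply_padeVec_minIdx_le (hu : ZeroSumTriple u) (n : Fin 3 → ℕ) {M : ℕ}
    (hM : ∀ i, M ≤ n (i + 1) + n (i + 2) + 1) :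
    f (padeVec u n (minIdx f u)) ≤ (triangleConst f * maxAbs f u) ^ (∑ j, n j + 1) *
      (triangleConst f ^ M * Real.exp (-(M * depth f u))) := by
  have hm : 0 < maxAbs f u := hu.maxAbs_pos
  have hC : 0 < triangleConst f := zero_lt_one.trans_le (one_le_triangleConst f)
  refine (hu.apply_padeVec_le n (minIdx f u) (hM _)).trans ?_
  rw [← mul_neg, Real.exp_nat_mul, ← mul_pow]
  gcongr
  rw [div_le_iff₀' hm]
  exact hu.apply_minIdx_le_mul_exp

lemma apply_cross_padeVec_le (hu : ZeroSumTriple u) (hw : ZeroSumTriple w) (n : Fin 3 → ℕ) {M : ℕ}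
    (hM₀ : M ≠ 0) (hM : ∀ i, M ≤ n (i + 1) + n (i + 2) + 1) (huw : minIdx f u = minIdx f w) :
    f (cross (padeVec u n) w) ≤ triangleConst f ^ (∑ j, n j + 2 + M) *
      maxAbs f u ^ (∑ j, n j + 1) * maxAbs f w *
      Real.exp (-min (M * depth f u) (depth f w)) := by
  have hmu : 0 < maxAbs f u := hu.maxAbs_pos
  have hmw : 0 < maxAbs f w := hw.maxAbs_pos
  have hC : 1 ≤ triangleConst f := one_le_triangleConst f
  have small_padeVec := hu.apply_padeVec_minIdx_le (f := f) n hM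
  have small_coord := hw.apply_minIdx_le_mul_exp (f := f)
  rw [← huw] at small_coord
  set i := minIdx f u
  have bound_padeVec : f (padeVec u n (i + 1)) ≤
      (triangleConst f * maxAbs f u) ^ (∑ j, n j + 1) := by
    simpa using hu.apply_padeVec_le n (i + 1) (Nat.zero_le _)
  set B := (triangleConst f * maxAbs f u) ^ (∑ j, n j + 1) * maxAbs f w *
    (triangleConst f ^ M * Real.exp (-min (M * depth f u) (depth f w))) with hB
  have term₁ : f (padeVec u n i * w (i + 1)) ≤ B := by
    rw [map_mul, hB, mul_right_comm]
    refine mul_le_mul (small_padeVec.trans ?_) (apply_le_maxAbs f _) (f.nonneg _) (by positivity)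
    gcongr
    exact min_le_left _ _
  have term₂ : f (-(padeVec u n (i + 1) * w i)) ≤ B := by
    rw [f.map_neg, map_mul, hB, mul_assoc]
    refine mul_le_mul bound_padeVec (small_coord.trans ?_) (f.nonneg _) (by positivity)
    gcongr
    · exact le_self_pow₀ hC hM₀
    · exact min_le_right _ _
  rw [cross_eq (hu.sum_padeVec n) hw.sum_eq_zero i, sub_eq_add_neg]
  refine (apply_add_le_triangleConst_mul term₁ term₂).trans_eq ?_
  rw [hB, mul_pow, show ∑ j, n j + 2 + M = 1 + (∑ j, n j + 1) + M by omega, pow_add, pow_add,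
    pow_one]
  ring

lemma log_apply_cross_padeVec_le (hu : ZeroSumTriple u) (hw : ZeroSumTriple w) (n : Fin 3 → ℕ)
    {M : ℕ} (hM₀ : M ≠ 0) (hM : ∀ i, M ≤ n (i + 1) + n (i + 2) + 1)
    (huw : minIdx f u = minIdx f w) (hD : cross (padeVec u n) w ≠ 0) :
    Real.log (f (cross (padeVec u n) w)) ≤
      (∑ j, n j + 2 + M : ℕ) * Real.log (triangleConst f) +
        (∑ j, n j + 1 : ℕ) * Real.log (maxAbs f u) + Real.log (maxAbs f w) -
        min (M * depth f u) (depth f w) := by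
  have hmu : 0 < maxAbs f u := hu.maxAbs_pos
  have hmw : 0 < maxAbs f w := hw.maxAbs_pos
  have hC : 0 < triangleConst f := zero_lt_one.trans_le (one_le_triangleConst f)
  refine (Real.log_le_log (f.pos hD)
    (hu.apply_cross_padeVec_le hw n hM₀ hM huw)).trans_eq ?_
  rw [Real.log_mul (by positivity) (by positivity), Real.log_mul (by positivity) (by positivity),
    Real.log_mul (by positivity) (by positivity), Real.log_pow, Real.log_pow, Real.log_exp]
  ring

end Pade

end

end ZeroSumTriple

namespace ZeroSumTriple

noncomputable section

lemma four_mul_sq_norm_sub_lt {z w : ℂ} (hz : z ≠ 0) (hw : w ≠ 0)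
    (hlog : |Real.log ‖z‖ - Real.log ‖w‖| < 1 / 3) (harg : |z.arg - w.arg| < 1 / 3) :
    4 * ‖z - w‖ ^ 2 < ‖z‖ * ‖w‖ := by
  have hz' := norm_pos_iff.mpr hz
  have hw' := norm_pos_iff.mpr hw
  set a := Real.log ‖z‖ - Real.log ‖w‖
  set b := z.arg - w.arg with hb
  have law_of_cosines : ‖z - w‖ ^ 2 = ‖z‖ ^ 2 + ‖w‖ ^ 2 - 2 * (‖z‖ * ‖w‖) * Real.cos b := by
    rw [Complex.sq_norm, Complex.normSq_apply, Complex.sub_re, Complex.sub_im, hb,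
      ← Complex.norm_mul_cos_arg z, ← Complex.norm_mul_cos_arg w, ← Complex.norm_mul_sin_arg z,
      ← Complex.norm_mul_sin_arg w, Real.cos_sub]
    linear_combination ‖z‖ ^ 2 * Real.sin_sq_add_cos_sq z.arg +
      ‖w‖ ^ 2 * Real.sin_sq_add_cos_sq w.arg
  have sum_sq : ‖z‖ ^ 2 + ‖w‖ ^ 2 = 2 * (‖z‖ * ‖w‖) * Real.cosh a := by
    rw [Real.cosh_eq, neg_sub, Real.exp_sub, Real.exp_sub, Real.exp_log hz', Real.exp_log hw']
    field_simp
  have sq_le {c : ℝ} (hc : |c| < 1 / 3) : c ^ 2 ≤ 1 / 9 := by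
    rw [← sq_abs]
    nlinarith [abs_nonneg c]
  have exp_le : Real.exp (1 / 18) ≤ 18 / 17 := by
    have h := Real.exp_bound_div_one_sub_of_interval (x := 1 / 18) (by norm_num) (by norm_num)
    norm_num at h ⊢
    exact h
  have cosh_le : Real.cosh a ≤ 18 / 17 := (Real.cosh_le_exp_half_sq a).trans <|
    (Real.exp_le_exp.mpr (by linarith [sq_le hlog])).trans exp_le
  have le_cos : 17 / 18 ≤ Real.cos b := by
    linarith [Real.one_sub_sq_div_two_le_cos (x := b), sq_le harg]
  rw [law_of_cosines, sum_sq]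
  nlinarith [mul_pos hz' hw']

variable {K : Type*} [Field K] (f : AbsoluteValue K ℝ) (u : Fin 3 → K) {w : Fin 3 → K}

/-- The ratio of the smallest coordinate to the cyclically next one. -/
def minRatio : K := u (minIdx f u) / u (minIdx f u + 1)

variable {f u}

lemma minRatio_ne_zero (hu : ZeroSumTriple u) : minRatio f u ≠ 0 :=
  div_ne_zero (hu.ne_zero _) (hu.ne_zero _)

lemma log_apply_minRatio (hu : ZeroSumTriple u) : Real.log (f (minRatio f u)) =
    Real.log (f (u (minIdx f u))) - Real.log (f (u (minIdx f u + 1))) := by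
  rw [minRatio, map_div₀, Real.log_div (hu.apply_pos _).ne' (hu.apply_pos _).ne']

lemma log_apply_minRatio_nonpos (hu : ZeroSumTriple u) : Real.log (f (minRatio f u)) ≤ 0 := by
  rw [hu.log_apply_minRatio, sub_nonpos]
  exact Real.log_le_log (hu.apply_pos _) (apply_minIdx_le f _)

lemma neg_log_apply_minRatio_le_depth (hu : ZeroSumTriple u) :
    -Real.log (f (minRatio f u)) ≤ depth f u := by
  have h := Finset.single_le_sum (f := fun i => Real.log (maxAbs f u) - Real.log (f (u i)))
    (fun i _ => sub_nonneg.mpr (hu.log_apply_le i)) (Finset.mem_univ (minIdx f u))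
  refine le_trans ?_ h
  rw [hu.log_apply_minRatio]
  linarith [hu.log_apply_le (f := f) (minIdx f u + 1)]

lemma log_apply_minIdx_add_one_le (hu : ZeroSumTriple u) :
    Real.log (f (u (minIdx f u + 1))) ≤ Real.log (maxAbs f u) +
      (Real.log (triangleConst f) - depth f u - Real.log (f (minRatio f u))) / 2 := by
  have hdepth : depth f u = _ := PadeResidue.sum_fin_three_rotate _ (minIdx f u)
  have hC : 0 < triangleConst f := zero_lt_one.trans_le (one_le_triangleConst f)
  have h := Real.log_le_log (hu.maxAbs_pos (f := f))
    (hu.maxAbs_le_triangleConst_mul (j := minIdx f u + 2) (by simp))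
  rw [Real.log_mul hC.ne' (hu.apply_pos _).ne'] at h
  rw [hu.log_apply_minRatio]
  linarith

lemma cross_eq_minRatio_sub (hu : ZeroSumTriple u) (hw : ZeroSumTriple w)
    (huw : minIdx f u = minIdx f w) : cross u w =
      (minRatio f u - minRatio f w) * (u (minIdx f u + 1) * w (minIdx f w + 1)) := by
  have h₁ := hu.ne_zero (minIdx f w + 1)
  have h₂ := hw.ne_zero (minIdx f w + 1)
  rw [cross_eq hu.sum_eq_zero hw.sum_eq_zero (minIdx f w), minRatio, minRatio, huw]
  field_simp

lemma log_apply_cross_le (hu : ZeroSumTriple u) (hw : ZeroSumTriple w)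
    (huw : minIdx f u = minIdx f w) (hne : cross u w ≠ 0) :
    Real.log (f (cross u w)) ≤
      Real.log (maxAbs f u) + Real.log (maxAbs f w) - (depth f u + depth f w) / 2 +
      (Real.log (triangleConst f) + Real.log (f (minRatio f u - minRatio f w)) -
        (Real.log (f (minRatio f u)) + Real.log (f (minRatio f w))) / 2) := by
  rw [hu.cross_eq_minRatio_sub hw huw] at hne ⊢
  rw [map_mul, map_mul, Real.log_mul (f.pos (left_ne_zero_of_mul hne)).ne'
    (mul_pos (hu.apply_pos _) (hw.apply_pos _)).ne', Real.log_mul (hu.apply_pos _).ne'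
    (hw.apply_pos _).ne']
  linarith [hu.log_apply_minIdx_add_one_le (f := f), hw.log_apply_minIdx_add_one_le (f := f)]

lemma log_apply_cross_le_of_isNonarchimedean (hf : IsNonarchimedean f) (hu : ZeroSumTriple u)
    (hw : ZeroSumTriple w) (huw : minIdx f u = minIdx f w)
    (hratio : f (minRatio f u) = f (minRatio f w)) (hne : cross u w ≠ 0) :
    Real.log (f (cross u w)) ≤
      Real.log (maxAbs f u) + Real.log (maxAbs f w) - (depth f u + depth f w) / 2 := by
  have h := hu.log_apply_cross_le hw huw hne
  rw [hu.cross_eq_minRatio_sub hw huw] at hne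
  have hsub : f (minRatio f u - minRatio f w) ≤ f (minRatio f w) := by
    rw [sub_eq_add_neg]
    simpa [hratio] using hf (minRatio f u) (-minRatio f w)
  have hlog := Real.log_le_log (f.pos (left_ne_zero_of_mul hne)) hsub
  rw [triangleConst_eq_one hf, Real.log_one, hratio] at h
  linarith

lemma log_apply_cross_lt_of_norm {σ : K →+* ℂ} (hf : ∀ z, f z = ‖σ z‖) (hu : ZeroSumTriple u)
    (hw : ZeroSumTriple w) (huw : minIdx f u = minIdx f w)
    (hlog : |Real.log (f (minRatio f u)) - Real.log (f (minRatio f w))| < 1 / 3)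
    (harg : |(σ (minRatio f u)).arg - (σ (minRatio f w)).arg| < 1 / 3) (hne : cross u w ≠ 0) :
    Real.log (f (cross u w)) <
      Real.log (maxAbs f u) + Real.log (maxAbs f w) - (depth f u + depth f w) / 2 := by
  have h := hu.log_apply_cross_le hw huw hne
  rw [hu.cross_eq_minRatio_sub hw huw] at hne
  have hzu := hu.minRatio_ne_zero (f := f)
  have hzw := hw.minRatio_ne_zero (f := f)
  have hsub := f.pos (left_ne_zero_of_mul hne)
  have hclose := four_mul_sq_norm_sub_lt (z := σ (minRatio f u)) (w := σ (minRatio f w))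
    (by simpa using hzu) (by simpa using hzw) (by simpa only [← hf] using hlog) harg
  rw [← map_sub, ← hf, ← hf, ← hf, show (4 : ℝ) = 2 ^ 2 by norm_num, ← mul_pow] at hclose
  have hclose' := Real.log_lt_log (by positivity) hclose
  rw [Real.log_pow, Real.log_mul two_ne_zero hsub.ne', Real.log_mul (f.pos hzu).ne'
    (f.pos hzw).ne'] at hclose'
  have hC := Real.log_le_log (zero_lt_one.trans_le (one_le_triangleConst f))
    (triangleConst_le_two f)
  push_cast at hclose'
  linarith

end

end ZeroSumTriple

/-! ### The unit equation -/

noncomputable section PlaceSystem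

/-- A number field as seen by the counting argument: finitely many weighted places `v : ι`,
together with a set `outer` of further nonarchimedean places, for which the product formula
survives as an inequality for the elements that are integral at all outer places. -/
structure PlaceSystem (K ι : Type*) [Field K] [Fintype ι] where
  abv : ι → AbsoluteValue K ℝ
  weight : ι → ℝ
  one_le_weight : ∀ v, 1 ≤ weight v
  weight_le_two : ∀ v, weight v ≤ 2
  exists_not_isNonarchimedean : ∃ v, ¬ IsNonarchimedean (abv v)
  exists_embedding : ∀ v, ¬ IsNonarchimedean (abv v) → ∃ σ : K →+* ℂ, ∀ z, abv v z = ‖σ z‖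
  eq_of_abs_log_sub_lt : ∀ v, IsNonarchimedean (abv v) → ∀ {x y : K}, x ≠ 0 → y ≠ 0 →
    |Real.log (abv v x) - Real.log (abv v y)| < 1 / 3 → abv v x = abv v y
  outer : Set (AbsoluteValue K ℝ)
  isNonarchimedean_of_mem_outer : ∀ f ∈ outer, IsNonarchimedean f
  sum_log_nonneg : ∀ {D : K}, D ≠ 0 → (∀ f ∈ outer, f D ≤ 1) →
    0 ≤ ∑ v, weight v * Real.log (abv v D)

namespace PlaceSystem

open ZeroSumTriple

variable {K ι : Type*} [Field K] [Fintype ι] (A : PlaceSystem K ι)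

/-- A family of pairwise nonproportional zero-sum triples whose coordinates are units at the outer
places and have prescribed absolute values at the places not in `S`. -/
structure IsUnitFamily (S : Finset ι) (U : Set (Fin 3 → K)) : Prop where
  zeroSumTriple : ∀ {u}, u ∈ U → ZeroSumTriple u
  eq_of_cross_eq_zero : ∀ {u w}, u ∈ U → w ∈ U → cross u w = 0 → u = w
  outer_apply_eq_one : ∀ {u}, u ∈ U → ∀ f ∈ A.outer, ∀ i, f (u i) = 1
  apply_eq_of_notMem : ∀ {u w}, u ∈ U → w ∈ U → ∀ {v}, v ∉ S → ∀ i,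
    A.abv v (u i) = A.abv v (w i)
  mem_of_not_isNonarchimedean : ∀ {v}, ¬ IsNonarchimedean (A.abv v) → v ∈ S

/-- The logarithmic height of the point of the projective plane with coordinates `u`. -/
def height (u : Fin 3 → K) : ℝ := ∑ v, A.weight v * Real.log (maxAbs (A.abv v) u)

/-- The depth of `u` at `v`, with the normalization of the place `v`. -/
def localDepth (u : Fin 3 → K) (v : ι) : ℝ := A.weight v * depth (A.abv v) u

/-- The indices of the smallest coordinates of `u` at the places in `S`. -/
def minIndices (S : Finset ι) (u : Fin 3 → K) (v : S) : Fin 3 := minIdx (A.abv v) u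

/-- The depths of `u` at the places in `S`, and the total depth outside of `S`. -/
def depthShare (S : Finset ι) (u : Fin 3 → K) : Option S → ℝ
  | none => ∑ v ∈ Sᶜ, A.localDepth u v
  | some v => A.localDepth u v

/-- The distribution of the total depth of `u` among the places, in rounded proportions. -/
def profile (S : Finset ι) (u : Fin 3 → K) (j : Option S) : ℕ :=
  ⌊10 * (S.card + 1) * A.depthShare S u j / A.height u⌋₊

lemma weight_pos (v : ι) : 0 < A.weight v := zero_lt_one.trans_le (A.one_le_weight v)

lemma sum_log_eq_zero {z : K} (hz : z ≠ 0) (h : ∀ f ∈ A.outer, f z = 1) :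
    ∑ v, A.weight v * Real.log (A.abv v z) = 0 := by
  have hinv := A.sum_log_nonneg (inv_ne_zero hz) fun f hf => by rw [map_inv₀, h f hf, inv_one]
  simp only [map_inv₀, Real.log_inv, mul_neg, Finset.sum_neg_distrib] at hinv
  exact (neg_nonneg.mp hinv).antisymm (A.sum_log_nonneg hz fun f hf => (h f hf).le)

namespace IsUnitFamily

variable {A} {S : Finset ι} {U : Set (Fin 3 → K)} {u w : Fin 3 → K}

lemma localDepth_nonneg (hU : A.IsUnitFamily S U) (hu : u ∈ U) (v : ι) :
    0 ≤ A.localDepth u v :=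
  mul_nonneg (A.weight_pos v).le (hU.zeroSumTriple hu).depth_nonneg

lemma sum_localDepth (hU : A.IsUnitFamily S U) (hu : u ∈ U) :
    ∑ v, A.localDepth u v = 3 * A.height u := by
  have hprod (i : Fin 3) : ∑ v, A.weight v * Real.log (A.abv v (u i)) = 0 :=
    A.sum_log_eq_zero ((hU.zeroSumTriple hu).ne_zero i) fun f hf => hU.outer_apply_eq_one hu f hf i
  simp only [localDepth, depth, Finset.mul_sum]
  rw [Finset.sum_comm]
  simp [mul_sub, hprod, height]

lemma height_nonneg (hU : A.IsUnitFamily S U) (hu : u ∈ U) : 0 ≤ A.height u := by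
  have h := Finset.sum_nonneg fun v (_ : v ∈ Finset.univ) => hU.localDepth_nonneg hu v
  linarith [hU.sum_localDepth hu]

lemma minIdx_eq (hU : A.IsUnitFamily S U) (hu : u ∈ U) (hw : w ∈ U)
    (hmin : A.minIndices S u = A.minIndices S w) (v : ι) :
    minIdx (A.abv v) u = minIdx (A.abv v) w := by
  by_cases hv : v ∈ S
  · exact congrFun hmin ⟨v, hv⟩
  · exact minIdx_congr (hU.apply_eq_of_notMem hu hw hv)

lemma sum_log_triangleConst_le (hU : A.IsUnitFamily S U) :
    ∑ v, A.weight v * Real.log (triangleConst (A.abv v)) ≤ S.card * Real.log 4 := by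
  have hS : ∑ v ∈ S, A.weight v * Real.log (triangleConst (A.abv v)) =
      ∑ v, A.weight v * Real.log (triangleConst (A.abv v)) := by
    refine Finset.sum_subset (Finset.subset_univ _) fun v _ hv => ?_
    rw [triangleConst_eq_one (not_not.mp fun h => hv (hU.mem_of_not_isNonarchimedean h)),
      Real.log_one, mul_zero]
  rw [← hS, ← nsmul_eq_mul]
  refine Finset.sum_le_card_nsmul _ _ _ fun v _ => ?_
  rw [show (4 : ℝ) = 2 ^ 2 by norm_num, Real.log_pow]
  refine mul_le_mul (A.weight_le_two v) ?_ (Real.log_nonneg (one_le_triangleConst _)) zero_le_two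
  exact Real.log_le_log (zero_lt_one.trans_le (one_le_triangleConst _)) (triangleConst_le_two _)

lemma outer_apply_cross_padeVec_le_one (hU : A.IsUnitFamily S U) (hu : u ∈ U) (hw : w ∈ U)
    (n : Fin 3 → ℕ) {f : AbsoluteValue K ℝ} (hf : f ∈ A.outer) :
    f (cross (padeVec u n) w) ≤ 1 := by
  have hu₁ := hU.outer_apply_eq_one hu f hf
  have hw₁ := hU.outer_apply_eq_one hw f hf
  have h := (hU.zeroSumTriple hu).apply_cross_padeVec_le (hU.zeroSumTriple hw) n one_ne_zero
    (fun i => Nat.le_add_left _ _) (minIdx_congr fun i => (hu₁ i).trans (hw₁ i).symm)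
  simpa [maxAbs_eq_one, depth_eq_zero, hu₁, hw₁,
    triangleConst_eq_one (A.isNonarchimedean_of_mem_outer f hf)] using h

-- The product formula for `cross (padeVec u n) w`.
lemma sum_min_localDepth_le (hU : A.IsUnitFamily S U) (hu : u ∈ U) (hw : w ∈ U)
    (hmin : A.minIndices S u = A.minIndices S w) {n : Fin 3 → ℕ} {M : ℕ} (hM₀ : M ≠ 0)
    (hM : ∀ i, M ≤ n (i + 1) + n (i + 2) + 1) (hne : cross (padeVec u n) w ≠ 0) :
    ∑ v, min (M * A.localDepth u v) (A.localDepth w v) ≤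
      (∑ j, n j + 1 : ℕ) * A.height u + A.height w +
        (∑ j, n j + 2 + M : ℕ) * (S.card * Real.log 4) := by
  have hprod := A.sum_log_nonneg hne fun f hf => hU.outer_apply_cross_padeVec_le_one hu hw n hf
  have hlocal (v : ι) : A.weight v * Real.log (A.abv v (cross (padeVec u n) w)) ≤
      (∑ j, n j + 2 + M : ℕ) * (A.weight v * Real.log (triangleConst (A.abv v))) +
        (∑ j, n j + 1 : ℕ) * (A.weight v * Real.log (maxAbs (A.abv v) u)) +
        A.weight v * Real.log (maxAbs (A.abv v) w) -
        min (M * A.localDepth u v) (A.localDepth w v) := by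
    have h := mul_le_mul_of_nonneg_left ((hU.zeroSumTriple hu).log_apply_cross_padeVec_le
      (hU.zeroSumTriple hw) n hM₀ hM (hU.minIdx_eq hu hw hmin v) hne) (A.weight_pos v).le
    rw [localDepth, localDepth, mul_left_comm (M : ℝ), ← mul_min_of_nonneg _ _ (A.weight_pos v).le]
    linarith
  have hsum := Finset.sum_le_sum fun v (_ : v ∈ Finset.univ) => hlocal v
  rw [Finset.sum_sub_distrib, Finset.sum_add_distrib, Finset.sum_add_distrib, ← Finset.mul_sum,
    ← Finset.mul_sum] at hsum
  have hconst := mul_le_mul_of_nonneg_left hU.sum_log_triangleConst_le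
    (Nat.cast_nonneg (α := ℝ) (∑ j, n j + 2 + M))
  simp only [height]
  linarith

section Profile

lemma depthShare_nonneg (hU : A.IsUnitFamily S U) (hu : u ∈ U) (j : Option S) :
    0 ≤ A.depthShare S u j := by
  cases j with
  | none => exact Finset.sum_nonneg fun v _ => hU.localDepth_nonneg hu v
  | some v => exact hU.localDepth_nonneg hu v

lemma sum_depthShare (hU : A.IsUnitFamily S U) (hu : u ∈ U) :
    ∑ j, A.depthShare S u j = 3 * A.height u := by
  rw [Fintype.sum_option, ← hU.sum_localDepth hu]
  simp only [depthShare]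
  rw [Finset.sum_coe_sort S (A.localDepth u), Finset.sum_compl_add_sum]

lemma sum_depthShare_div_height (hU : A.IsUnitFamily S U) (hu : u ∈ U) (hpos : 0 < A.height u) :
    ∑ j, 10 * (S.card + 1) * A.depthShare S u j / A.height u = 30 * (S.card + 1) := by
  rw [← Finset.sum_div, ← Finset.mul_sum, hU.sum_depthShare hu]
  field_simp
  norm_num

lemma profile_le (hU : A.IsUnitFamily S U) (hu : u ∈ U) (j : Option S) :
    A.profile S u j ≤ 10 * (S.card + 1) * A.depthShare S u j / A.height u := by
  have := hU.depthShare_nonneg hu j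
  have := hU.height_nonneg hu
  exact Nat.floor_le (by positivity)

lemma sum_profile_le (hU : A.IsUnitFamily S U) (hu : u ∈ U) (hpos : 0 < A.height u) :
    ∑ j, A.profile S u j ≤ 30 * (S.card + 1) := by
  have h := Finset.sum_le_sum fun j (_ : j ∈ Finset.univ) => hU.profile_le hu j
  rw [hU.sum_depthShare_div_height hu hpos] at h
  exact_mod_cast h

lemma le_sum_profile (hU : A.IsUnitFamily S U) (hu : u ∈ U) (hpos : 0 < A.height u) :
    (29 * (S.card + 1) : ℝ) ≤ ∑ j, (A.profile S u j : ℝ) := by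
  have h := Finset.sum_le_sum fun j (_ : j ∈ Finset.univ) =>
    (Nat.lt_floor_add_one (10 * (S.card + 1) * A.depthShare S u j / A.height u)).le
  rw [hU.sum_depthShare_div_height hu hpos, Finset.sum_add_distrib] at h
  simp only [Finset.sum_const, Finset.card_univ, Fintype.card_option, Fintype.card_coe,
    nsmul_eq_mul, mul_one] at h
  push_cast at h
  simp only [profile]
  linarith

lemma profile_mul_height_le (hU : A.IsUnitFamily S U) (hu : u ∈ U) (hpos : 0 < A.height u)
    (j : Option S) : A.profile S u j * A.height u ≤ 10 * (S.card + 1) * A.depthShare S u j :=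
  (le_div_iff₀ hpos).mp (hU.profile_le hu j)

lemma profile_some_mul_min_height_le (hU : A.IsUnitFamily S U) (hu : u ∈ U) (hw : w ∈ U)
    (hu₀ : 0 < A.height u) (hw₀ : 0 < A.height w) (hprof : A.profile S u = A.profile S w) (M : ℕ)
    (v : S) : A.profile S u (some v) * min (M * A.height u) (A.height w) ≤
      10 * (S.card + 1) * min (M * A.localDepth u v) (A.localDepth w v) := by
  rw [mul_min_of_nonneg _ _ (Nat.cast_nonneg _), mul_min_of_nonneg _ _ (by positivity)]
  refine min_le_min ?_ ?_
  · rw [mul_left_comm, mul_left_comm (10 * _ : ℝ)]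
    exact mul_le_mul_of_nonneg_left (hU.profile_mul_height_le hu hu₀ (some v)) M.cast_nonneg
  · rw [hprof]
    exact hU.profile_mul_height_le hw hw₀ (some v)

lemma profile_none_mul_min_height_le (hU : A.IsUnitFamily S U) (hu : u ∈ U) (hw : w ∈ U)
    (hw₀ : 0 < A.height w) (hprof : A.profile S u = A.profile S w) {M : ℕ} (hM₀ : M ≠ 0) :
    A.profile S u none * min (M * A.height u) (A.height w) ≤
      10 * (S.card + 1) * ∑ v ∈ Sᶜ, min (M * A.localDepth u v) (A.localDepth w v) := by
  have hmin : ∑ v ∈ Sᶜ, min (M * A.localDepth u v) (A.localDepth w v) =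
      A.depthShare S w none := by
    refine Finset.sum_congr rfl fun v hv => min_eq_right ?_
    have huw : A.localDepth u v = A.localDepth w v := by
      rw [localDepth, depth_congr (hU.apply_eq_of_notMem hu hw (Finset.mem_compl.mp hv)),
        localDepth]
    rw [huw]
    exact le_mul_of_one_le_left (hU.localDepth_nonneg hw v)
      (Nat.one_le_cast.mpr (Nat.one_le_iff_ne_zero.mpr hM₀))
  rw [hmin, hprof]
  exact (mul_le_mul_of_nonneg_left (min_le_right _ _) (Nat.cast_nonneg _)).trans
    (hU.profile_mul_height_le hw hw₀ none)

lemma mul_min_height_le_sum_min_localDepth (hU : A.IsUnitFamily S U) (hu : u ∈ U) (hw : w ∈ U)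
    (hu₀ : 0 < A.height u) (hw₀ : 0 < A.height w) (hprof : A.profile S u = A.profile S w) {M : ℕ}
    (hM₀ : M ≠ 0) : 2.9 * min (M * A.height u) (A.height w) ≤
      ∑ v, min (M * A.localDepth u v) (A.localDepth w v) := by
  have hsome := Finset.sum_le_sum fun v (_ : v ∈ Finset.univ) =>
    hU.profile_some_mul_min_height_le hu hw hu₀ hw₀ hprof M v
  have hnone := hU.profile_none_mul_min_height_le hu hw hw₀ hprof hM₀
  rw [← Finset.sum_mul, ← Finset.mul_sum,
    Finset.sum_coe_sort S fun v => min (M * A.localDepth u v) (A.localDepth w v)] at hsome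
  have hμ : 0 ≤ min (M * A.height u) (A.height w) := le_min (by positivity) hw₀.le
  have hsum := mul_le_mul_of_nonneg_right (hU.le_sum_profile hu hu₀) hμ
  rw [Fintype.sum_option] at hsum
  rw [← Finset.sum_compl_add_sum S]
  refine le_of_mul_le_mul_left ?_ (by positivity : (0 : ℝ) < 10 * (S.card + 1))
  linarith

end Profile

section Gap

lemma log_four_lt : Real.log 4 < 1.3864 := by
  rw [show (4 : ℝ) = 2 ^ 2 by norm_num, Real.log_pow]
  norm_num
  linarith [Real.log_two_lt_d9]

lemma card_mul_log_four_le (hu : 16 * (S.card : ℝ) < A.height u) :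
    S.card * Real.log 4 ≤ 0.08665 * A.height u := by
  have h := mul_le_mul_of_nonneg_left log_four_lt.le (Nat.cast_nonneg (α := ℝ) S.card)
  linarith

lemma height_pos_of_lt (hu : 16 * (S.card : ℝ) < A.height u) : 0 < A.height u :=
  lt_of_le_of_lt (by positivity) hu

lemma mul_height_le_of_ne (hU : A.IsUnitFamily S U) (hu : u ∈ U) (hw : w ∈ U) (huw : u ≠ w)
    (hmin : A.minIndices S u = A.minIndices S w) (hprof : A.profile S u = A.profile S w)
    (hlarge : 16 * (S.card : ℝ) < A.height u) (hle : A.height u ≤ A.height w) :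
    1.6 * A.height u ≤ A.height w := by
  have hpos := height_pos_of_lt hlarge
  have hne : cross (padeVec u 0) w ≠ 0 := by
    rw [(hU.zeroSumTriple hu).cross_padeVec_zero]
    exact neg_ne_zero.mpr (mt (hU.eq_of_cross_eq_zero hu hw) huw)
  have hupper := hU.sum_min_localDepth_le hu hw hmin one_ne_zero (fun _ => Nat.le_add_left _ _) hne
  have hlower := hU.mul_min_height_le_sum_min_localDepth hu hw hpos (hpos.trans_le hle) hprof
    one_ne_zero
  simp only [Nat.cast_one, one_mul, min_eq_left hle] at hlower
  simp only [Pi.zero_apply, Finset.sum_const_zero, zero_add, Nat.cast_one, one_mul] at hupper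
  push_cast at hupper
  linarith [card_mul_log_four_le hlarge]

lemma exists_nat_mul_lt_le {a b : ℝ} (ha : 0 < a) (hab : 16 * a ≤ b) :
    ∃ N : ℕ, 7 ≤ N ∧ 2 * N * a < b ∧ b ≤ (2 * N + 2) * a := by
  have hle : ((7 + 1 : ℕ) : ℝ) ≤ b / (2 * a) := by
    rw [le_div_iff₀ (by positivity)]
    push_cast
    linarith
  obtain ⟨N, hN⟩ : ∃ N, ⌈b / (2 * a)⌉₊ = N + 1 := Nat.exists_eq_add_one.mpr
    (Nat.ceil_pos.mpr (lt_of_lt_of_le (by norm_num) hle))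
  rw [Nat.ceil_eq_iff (Nat.succ_ne_zero N), lt_div_iff₀ (by positivity),
    div_le_iff₀ (by positivity)] at hN
  refine ⟨N, ?_, ?_, ?_⟩
  · by_contra hlt
    have h8 : (N : ℝ) + 1 ≤ 7 := by exact_mod_cast not_le.mp hlt
    push_cast at hN
    nlinarith
  all_goals
    push_cast at hN
    linarith

lemma height_lt [CharZero K] (hU : A.IsUnitFamily S U) (hu : u ∈ U) (hw : w ∈ U)
    (hmin : A.minIndices S u = A.minIndices S w) (hprof : A.profile S u = A.profile S w)
    (hlarge : 16 * (S.card : ℝ) < A.height u) : A.height w < 16 * A.height u := by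
  have hpos := height_pos_of_lt hlarge
  by_contra! hge
  obtain ⟨N, hN₇, hN_lt, hN_le⟩ := exists_nat_mul_lt_le hpos hge
  obtain ⟨n, hn, hsum, hne⟩ : ∃ n : Fin 3 → ℕ, (∀ i, N ≤ n i) ∧ ∑ i, n i ≤ 3 * N + 1 ∧
      cross (padeVec u n) w ≠ 0 := by
    rcases (hU.zeroSumTriple hu).exists_cross_padeVec_ne_zero ((hU.zeroSumTriple hw).ne_zero 0)
      (fun _ => N) 0 with h | h
    · exact ⟨_, fun _ => le_rfl, by simp, h⟩
    · exact ⟨_, fun i => Nat.le_add_right _ _, by simp [Finset.sum_add_distrib], h⟩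
  have hupper := hU.sum_min_localDepth_le hu hw hmin (M := 2 * N + 1) (Nat.succ_ne_zero _)
    (fun i => by linarith [hn (i + 1), hn (i + 2)]) hne
  have hlower := hU.mul_min_height_le_sum_min_localDepth hu hw hpos (by linarith) hprof
    (Nat.succ_ne_zero (2 * N))
  have hsum' : (∑ i, n i : ℕ) ≤ (3 * N + 1 : ℝ) := by exact_mod_cast hsum
  have hN : (7 : ℝ) ≤ N := by exact_mod_cast hN₇
  push_cast at hupper hlower hsum'
  have hheight : (∑ i, (n i : ℝ) + 1) * A.height u ≤ (3 * N + 2) * A.height u :=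
    mul_le_mul_of_nonneg_right (by linarith) hpos.le
  have herror : (∑ i, (n i : ℝ) + 2 + (2 * N + 1)) * (S.card * Real.log 4) ≤
      (5 * N + 4) * (0.08665 * A.height u) :=
    mul_le_mul (by linarith) (card_mul_log_four_le hlarge) (by positivity) (by positivity)
  rcases min_choice ((2 * N + 1) * A.height u) (A.height w) with hm | hm <;>
  · rw [hm] at hlower
    linarith [mul_le_mul_of_nonneg_right hN hpos.le]

lemma exists_pow_mul_le {α : Type*} {h : α → ℝ} {q : ℝ} (hq : 0 ≤ q) {n : ℕ} {F : Finset α}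
    (hF : ∀ x ∈ F, ∀ y ∈ F, x ≠ y → h x ≤ h y → q * h x ≤ h y) (hcard : n < F.card) :
    ∃ u ∈ F, ∃ w ∈ F, q ^ n * h u ≤ h w := by
  suffices ∃ u ∈ F, (∀ z ∈ F, h u ≤ h z) ∧ ∃ w ∈ F, q ^ n * h u ≤ h w by
    obtain ⟨u, hu, -, w, hw, hle⟩ := this
    exact ⟨u, hu, w, hw, hle⟩
  induction n generalizing F with
  | zero =>
    obtain ⟨u, hu, hmin⟩ := F.exists_min_image h (Finset.card_pos.mp hcard)
    exact ⟨u, hu, hmin, u, hu, by simp⟩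
  | succ n ih =>
    obtain ⟨u, hu, hmin⟩ := F.exists_min_image h (Finset.card_pos.mp (Nat.zero_lt_of_lt hcard))
    have hsub := F.erase_subset u
    obtain ⟨u', hu', -, w, hw, hle⟩ := ih (F := F.erase u)
      (fun x hx y hy => hF x (hsub hx) y (hsub hy)) (by rw [Finset.card_erase_of_mem hu]; omega)
    refine ⟨u, hu, hmin, w, hsub hw, ?_⟩
    calc q ^ (n + 1) * h u = q ^ n * (q * h u) := by ring
      _ ≤ q ^ n * h u' := mul_le_mul_of_nonneg_left (hF u hu u' (hsub hu')
          (Finset.ne_of_mem_erase hu').symm (hmin u' (hsub hu'))) (pow_nonneg hq n)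
      _ ≤ h w := hle

lemma card_le_six [CharZero K] (hU : A.IsUnitFamily S U) {F : Finset (Fin 3 → K)}
    (hF : ∀ u ∈ F, u ∈ U)
    (hlarge : ∀ u ∈ F, 16 * (S.card : ℝ) < A.height u)
    (hmin : ∀ u ∈ F, ∀ w ∈ F, A.minIndices S u = A.minIndices S w)
    (hprof : ∀ u ∈ F, ∀ w ∈ F, A.profile S u = A.profile S w) : F.card ≤ 6 := by
  by_contra! hcard
  obtain ⟨u, hu, w, hw, hle⟩ := exists_pow_mul_le (h := A.height) (q := 1.6) (by norm_num)
    (fun u hu w hw huw => hU.mul_height_le_of_ne (hF u hu) (hF w hw) huw (hmin u hu w hw)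
      (hprof u hu w hw) (hlarge u hu)) hcard
  have hlt := hU.height_lt (hF u hu) (hF w hw) (hmin u hu w hw) (hprof u hu w hw) (hlarge u hu)
  have hpow : (16 : ℝ) * A.height u ≤ 1.6 ^ 6 * A.height u :=
    mul_le_mul_of_nonneg_right (by norm_num) (height_pos_of_lt (hlarge u hu)).le
  exact absurd (hpow.trans hle) hlt.not_ge

end Gap

end IsUnitFamily

end PlaceSystem

end PlaceSystem

section Choose

lemma exists_finset_sum_le_card_le (J : Type*) [Fintype J] (k : ℕ) :
    ∃ t : Finset (J → ℕ), (∀ f : J → ℕ, ∑ j, f j ≤ k → f ∈ t) ∧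
      t.card ≤ (k + Fintype.card J).choose (Fintype.card J) := by
  refine ⟨((Finset.univ : Finset (Option J)).finsuppAntidiag k).image fun g j => g (some j),
    fun f hf => Finset.mem_image.mpr
      ⟨Finsupp.equivFunOnFinite.symm fun o => o.elim (k - ∑ j, f j) f, ?_, by ext; simp⟩, ?_⟩
  · rw [Finset.mem_finsuppAntidiag, Fintype.sum_option]
    exact ⟨by simp [Nat.sub_add_cancel hf], Finset.subset_univ _⟩
  · refine Finset.card_image_le.trans_eq ?_
    rw [Finset.card_finsuppAntidiag_nat_eq_multichoose, Nat.multichoose_eq, Finset.card_univ,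
      Fintype.card_option, add_right_comm, Nat.add_sub_cancel, add_comm, Nat.choose_symm_add]

lemma pow_self_le_mul_factorial {n : ℕ} (hn : n ≠ 0) :
    (n : ℝ) ^ n ≤ 0.4 * 2.72 ^ n * n.factorial := by
  have hsqrt : 2.5 ≤ √(2 * Real.pi * n) := by
    have h1 : (1 : ℝ) ≤ n := Nat.one_le_cast.mpr (Nat.one_le_iff_ne_zero.mpr hn)
    exact Real.le_sqrt_of_sq_le (by nlinarith [Real.pi_gt_d4])
  have hexp : (n / 2.72 : ℝ) ^ n ≤ (n / Real.exp 1) ^ n := by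
    gcongr
    exact Real.exp_one_lt_d9.le.trans (by norm_num)
  have hstirling := (mul_le_mul hsqrt hexp (by positivity) (Real.sqrt_nonneg _)).trans
    (Stirling.le_factorial_stirling n)
  rw [div_pow, mul_div_assoc', div_le_iff₀ (by positivity)] at hstirling
  linarith

lemma choose_mul_self_le (c : ℕ) {n : ℕ} (hn : n ≠ 0) :
    ((c * n).choose n : ℝ) ≤ 0.4 * (2.72 * c) ^ n := by
  refine (Nat.choose_le_pow_div n (c * n)).trans ?_
  rw [div_le_iff₀ (by positivity), Nat.cast_mul, mul_pow, mul_pow]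
  have h := mul_le_mul_of_nonneg_left (pow_self_le_mul_factorial hn)
    (by positivity : (0 : ℝ) ≤ (c : ℝ) ^ n)
  linarith

lemma class_count_le {s : ℕ} (hs : s ≠ 0) :
    6 * (3 ^ s * (30 * (s + 1) + (s + 1)).choose (s + 1)) +
      3 ^ s * 20 ^ s * (144 * s + s).choose s + 1 ≤ 2 ^ (16 * s) := by
  obtain ⟨k, rfl⟩ := Nat.exists_eq_succ_of_ne_zero hs
  rw [← Nat.succ_mul, ← Nat.succ_mul, ← Nat.cast_le (α := ℝ)]
  push_cast
  calc 6 * (3 ^ (k + 1) * ((31 * (k + 1 + 1)).choose (k + 1 + 1) : ℝ)) +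
        3 ^ (k + 1) * 20 ^ (k + 1) * ((145 * (k + 1)).choose (k + 1) : ℝ) + 1
      ≤ 6 * (3 ^ (k + 1) * (0.4 * (2.72 * (31 : ℕ)) ^ (k + 1 + 1))) +
        3 ^ (k + 1) * 20 ^ (k + 1) * (0.4 * (2.72 * (145 : ℕ)) ^ (k + 1)) + 1 ^ k := by
        rw [one_pow]
        gcongr <;> exact choose_mul_self_le _ (Nat.succ_ne_zero _)
    _ = 6 * 3 * 0.4 * 84.32 ^ 2 * (3 * 84.32) ^ k +
        3 * 20 * 0.4 * 394.4 * (3 * 20 * 394.4) ^ k + 1 ^ k := by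
        rw [show (2.72 * (31 : ℕ) : ℝ) = 84.32 by norm_num,
          show (2.72 * (145 : ℕ) : ℝ) = 394.4 by norm_num, mul_pow, mul_pow, mul_pow]
        ring
    _ ≤ 6 * 3 * 0.4 * 84.32 ^ 2 * 65536 ^ k + 3 * 20 * 0.4 * 394.4 * 65536 ^ k + 65536 ^ k := by
        gcongr <;> norm_num
    _ ≤ 65536 * 65536 ^ k := by
        rw [← add_mul, ← add_one_mul]
        gcongr
        norm_num
    _ = 2 ^ (16 * (k + 1)) := by
        rw [pow_mul, pow_succ']
        norm_num

lemma abs_sub_lt_of_natFloor_eq {q a b : ℝ} (hq : 0 < q) (ha : 0 ≤ a) (hb : 0 ≤ b)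
    (h : ⌊q * a⌋₊ = ⌊q * b⌋₊) : |a - b| < 1 / q := by
  have ha' := Nat.floor_le (mul_nonneg hq.le ha)
  have hb' := Nat.floor_le (mul_nonneg hq.le hb)
  have ha₁ := Nat.lt_floor_add_one (q * a)
  have hb₁ := Nat.lt_floor_add_one (q * b)
  rw [h] at ha' ha₁
  have hlt : |q * a - q * b| < 1 := abs_lt.mpr (by constructor <;> linarith)
  rwa [← mul_sub, abs_mul, abs_of_pos hq, ← lt_div_iff₀' hq] at hlt

lemma abs_sub_lt_of_floor_eq {q a b : ℝ} (hq : 0 < q) (h : ⌊q * a⌋ = ⌊q * b⌋) :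
    |a - b| < 1 / q := by
  have hlt := Int.abs_sub_lt_one_of_floor_eq_floor h
  rwa [← mul_sub, abs_mul, abs_of_pos hq, ← lt_div_iff₀' hq] at hlt

end Choose

namespace PlaceSystem

open ZeroSumTriple

noncomputable section

variable {K ι : Type*} [Field K] [Fintype ι] (A : PlaceSystem K ι) (S : Finset ι) (u : Fin 3 → K)

/-- The argument of `z` under the embedding attached to `v`, or `0` if `v` is nonarchimedean. -/
def arg (v : ι) (z : K) : ℝ :=
  if h : IsNonarchimedean (A.abv v) then 0 else ((A.exists_embedding v h).choose z).arg

/-- The absolute values of the ratios `minRatio` at the places of `S`, on a logarithmic scale and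
rounded to multiples of `1 / 3`. -/
def ratioProfile (v : S) : ℕ := ⌊3 * -Real.log (A.abv v (minRatio (A.abv v) u))⌋₊

/-- The arguments of the ratios `minRatio` at the places of `S`, rounded to multiples of `1 / 3`. -/
def argProfile (v : S) : ℤ := ⌊3 * A.arg v (minRatio (A.abv v) u)⌋

lemma argProfile_mem_Icc (v : S) : A.argProfile S u v ∈ Finset.Icc (-10) 9 := by
  obtain ⟨hlt, hle⟩ : -Real.pi < A.arg v (minRatio (A.abv v) u) ∧
      A.arg v (minRatio (A.abv v) u) ≤ Real.pi := by
    rw [arg]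
    split_ifs
    · exact ⟨neg_neg_iff_pos.mpr Real.pi_pos, Real.pi_pos.le⟩
    · exact ⟨Complex.neg_pi_lt_arg _, Complex.arg_le_pi _⟩
  have hpi := Real.pi_lt_d2
  rw [Finset.mem_Icc, argProfile, Int.le_floor, ← Int.lt_add_one_iff, Int.floor_lt]
  push_cast
  constructor <;> linarith

namespace IsUnitFamily

variable {A S u} {U : Set (Fin 3 → K)} {w : Fin 3 → K}

lemma card_le_of_large [CharZero K] (hU : A.IsUnitFamily S U) {F : Finset (Fin 3 → K)}
    (hF : ∀ u ∈ F, u ∈ U) (hlarge : ∀ u ∈ F, 16 * (S.card : ℝ) < A.height u) :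
    F.card ≤ 6 * (3 ^ S.card * (30 * (S.card + 1) + (S.card + 1)).choose (S.card + 1)) := by
  obtain ⟨t, ht, hcard⟩ := exists_finset_sum_le_card_le (Option S) (30 * (S.card + 1))
  simp only [Fintype.card_option, Fintype.card_coe] at hcard
  have hclass := Finset.card_le_mul_card_image_of_maps_to (s := F)
    (f := fun u => (A.minIndices S u, A.profile S u)) (t := Finset.univ ×ˢ t)
    (fun u hu => Finset.mem_product.mpr ⟨Finset.mem_univ _,
      ht _ (hU.sum_profile_le (hF u hu) (height_pos_of_lt (hlarge u hu)))⟩) 6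
    (fun b _ => by
      have heq {u} (hu : u ∈ F.filter fun u => (A.minIndices S u, A.profile S u) = b) :=
        Prod.ext_iff.mp (Finset.mem_filter.mp hu).2
      have hsub := F.filter_subset fun u => (A.minIndices S u, A.profile S u) = b
      exact hU.card_le_six (fun u hu => hF u (hsub hu)) (fun u hu => hlarge u (hsub hu))
        (fun u hu w hw => (heq hu).1.trans (heq hw).1.symm)
        (fun u hu w hw => (heq hu).2.trans (heq hw).2.symm))
  refine hclass.trans (Nat.mul_le_mul_left 6 ?_)
  rw [Finset.card_product, Finset.card_univ, Fintype.card_fun, Fintype.card_coe, Fintype.card_fin]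
  exact Nat.mul_le_mul_left _ hcard

lemma ratioProfile_le (hU : A.IsUnitFamily S U) (hu : u ∈ U) (v : S) :
    A.ratioProfile S u v ≤ 3 * A.localDepth u v := by
  have hu₀ := hU.zeroSumTriple hu
  have hratio := neg_nonneg.mpr (hu₀.log_apply_minRatio_nonpos (f := A.abv v))
  refine (Nat.floor_le (mul_nonneg zero_le_three hratio)).trans ?_
  exact mul_le_mul_of_nonneg_left (hu₀.neg_log_apply_minRatio_le_depth.trans
    (le_mul_of_one_le_left hu₀.depth_nonneg (A.one_le_weight v))) zero_le_three

lemma sum_ratioProfile_le (hU : A.IsUnitFamily S U) (hu : u ∈ U)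
    (hsmall : A.height u ≤ 16 * S.card) : ∑ v, A.ratioProfile S u v ≤ 144 * S.card := by
  have h : (∑ v, (A.ratioProfile S u v : ℝ)) ≤ 144 * S.card :=
    calc (∑ v, (A.ratioProfile S u v : ℝ)) ≤ ∑ v : S, 3 * A.localDepth u v :=
          Finset.sum_le_sum fun v _ => hU.ratioProfile_le hu v
      _ = 3 * ∑ v ∈ S, A.localDepth u v := by
          rw [← Finset.mul_sum, Finset.sum_coe_sort S (A.localDepth u)]
      _ ≤ 3 * ∑ v, A.localDepth u v := mul_le_mul_of_nonneg_left
          (Finset.sum_le_univ_sum_of_nonneg (hU.localDepth_nonneg hu)) zero_le_three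
      _ ≤ 144 * S.card := by
          rw [hU.sum_localDepth hu]
          linarith
  exact_mod_cast h

lemma abs_log_minRatio_sub_lt (hU : A.IsUnitFamily S U) (hu : u ∈ U) (hw : w ∈ U)
    (hratio : A.ratioProfile S u = A.ratioProfile S w) (v : S) :
    |Real.log (A.abv v (minRatio (A.abv v) u)) - Real.log (A.abv v (minRatio (A.abv v) w))| <
      1 / 3 := by
  rw [abs_sub_comm, ← neg_sub_neg]
  exact abs_sub_lt_of_natFloor_eq zero_lt_three
    (neg_nonneg.mpr (hU.zeroSumTriple hu).log_apply_minRatio_nonpos)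
    (neg_nonneg.mpr (hU.zeroSumTriple hw).log_apply_minRatio_nonpos) (congrFun hratio v)

lemma apply_minRatio_eq (hU : A.IsUnitFamily S U) (hu : u ∈ U) (hw : w ∈ U)
    (hmin : A.minIndices S u = A.minIndices S w)
    (hratio : A.ratioProfile S u = A.ratioProfile S w) {v : ι} (hv : IsNonarchimedean (A.abv v)) :
    A.abv v (minRatio (A.abv v) u) = A.abv v (minRatio (A.abv v) w) := by
  by_cases hvS : v ∈ S
  · exact A.eq_of_abs_log_sub_lt v hv (hU.zeroSumTriple hu).minRatio_ne_zero
      (hU.zeroSumTriple hw).minRatio_ne_zero (hU.abs_log_minRatio_sub_lt hu hw hratio ⟨v, hvS⟩)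
  · have happly := hU.apply_eq_of_notMem hu hw hvS
    rw [minRatio, minRatio, hU.minIdx_eq hu hw hmin, map_div₀, map_div₀, happly, happly]

lemma log_apply_cross_lt (hU : A.IsUnitFamily S U) (hu : u ∈ U) (hw : w ∈ U)
    (hmin : A.minIndices S u = A.minIndices S w)
    (hratio : A.ratioProfile S u = A.ratioProfile S w)
    (harg : A.argProfile S u = A.argProfile S w) (hne : cross u w ≠ 0) {v : ι}
    (hv : ¬ IsNonarchimedean (A.abv v)) :
    Real.log (A.abv v (cross u w)) <
      Real.log (maxAbs (A.abv v) u) + Real.log (maxAbs (A.abv v) w) -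
        (depth (A.abv v) u + depth (A.abv v) w) / 2 := by
  have hvS := hU.mem_of_not_isNonarchimedean hv
  refine (hU.zeroSumTriple hu).log_apply_cross_lt_of_norm (A.exists_embedding v hv).choose_spec
    (hU.zeroSumTriple hw) (hU.minIdx_eq hu hw hmin v)
    (hU.abs_log_minRatio_sub_lt hu hw hratio ⟨v, hvS⟩) ?_ hne
  have h := abs_sub_lt_of_floor_eq zero_lt_three (congrFun harg ⟨v, hvS⟩)
  simpa only [arg, dif_neg hv] using h

-- The product formula for `cross u w`, whose size is smaller than expected at every place.
lemma eq_of_profiles_eq [CharZero K] (hU : A.IsUnitFamily S U) (hu : u ∈ U) (hw : w ∈ U)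
    (hmin : A.minIndices S u = A.minIndices S w)
    (hratio : A.ratioProfile S u = A.ratioProfile S w)
    (harg : A.argProfile S u = A.argProfile S w) : u = w := by
  by_contra huw
  have hne : cross u w ≠ 0 := mt (hU.eq_of_cross_eq_zero hu hw) huw
  have hprod := A.sum_log_nonneg hne fun f hf => by
    simpa [(hU.zeroSumTriple hu).cross_padeVec_zero] using
      hU.outer_apply_cross_padeVec_le_one hu hw 0 hf
  have hlt : ∑ v, A.weight v * Real.log (A.abv v (cross u w)) <
      ∑ v, A.weight v * (Real.log (maxAbs (A.abv v) u) + Real.log (maxAbs (A.abv v) w) -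
        (depth (A.abv v) u + depth (A.abv v) w) / 2) := by
    obtain ⟨v₀, hv₀⟩ := A.exists_not_isNonarchimedean
    refine Finset.sum_lt_sum (fun v _ => mul_le_mul_of_nonneg_left ?_ (A.weight_pos v).le)
      ⟨v₀, Finset.mem_univ _, mul_lt_mul_of_pos_left
        (hU.log_apply_cross_lt hu hw hmin hratio harg hne hv₀) (A.weight_pos v₀)⟩
    by_cases hv : IsNonarchimedean (A.abv v)
    · exact (hU.zeroSumTriple hu).log_apply_cross_le_of_isNonarchimedean hv (hU.zeroSumTriple hw)
        (hU.minIdx_eq hu hw hmin v) (hU.apply_minRatio_eq hu hw hmin hratio hv) hne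
    · exact (hU.log_apply_cross_lt hu hw hmin hratio harg hne hv).le
  have heq : ∑ v, A.weight v * (Real.log (maxAbs (A.abv v) u) + Real.log (maxAbs (A.abv v) w) -
        (depth (A.abv v) u + depth (A.abv v) w) / 2) =
      A.height u + A.height w - (∑ v, A.localDepth u v + ∑ v, A.localDepth w v) / 2 := by
    simp only [height, localDepth, mul_sub, mul_add, mul_div_assoc', add_div,
      Finset.sum_sub_distrib, Finset.sum_add_distrib, Finset.sum_div]
  rw [heq, hU.sum_localDepth hu, hU.sum_localDepth hw] at hlt
  linarith [hU.height_nonneg hu, hU.height_nonneg hw]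

lemma card_le_of_small [CharZero K] (hU : A.IsUnitFamily S U) {F : Finset (Fin 3 → K)}
    (hF : ∀ u ∈ F, u ∈ U) (hsmall : ∀ u ∈ F, A.height u ≤ 16 * (S.card : ℝ)) :
    F.card ≤ 3 ^ S.card * 20 ^ S.card * (144 * S.card + S.card).choose S.card := by
  obtain ⟨t, ht, hcard⟩ := exists_finset_sum_le_card_le S (144 * S.card)
  rw [Fintype.card_coe] at hcard
  have hinj := Finset.card_le_card_of_injOn (s := F)
    (fun u => ((A.minIndices S u, A.argProfile S u), A.ratioProfile S u))
    (t := (Finset.univ ×ˢ Fintype.piFinset fun _ => Finset.Icc (-10) 9) ×ˢ t)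
    (fun u hu => Finset.mem_product.mpr ⟨Finset.mem_product.mpr ⟨Finset.mem_univ _,
      Fintype.mem_piFinset.mpr (A.argProfile_mem_Icc S u)⟩,
      ht _ (hU.sum_ratioProfile_le (hF u hu) (hsmall u hu))⟩)
    (fun u hu w hw h => by
      simp only [Prod.mk.injEq] at h
      exact hU.eq_of_profiles_eq (hF u hu) (hF w hw) h.1.1 h.2 h.1.2)
  refine hinj.trans ?_
  rw [Finset.card_product, Finset.card_product, Finset.card_univ, Fintype.card_piFinset,
    Finset.prod_const, Finset.card_univ, Fintype.card_fun, Fintype.card_coe, Fintype.card_fin]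
  exact Nat.mul_le_mul_left _ hcard

lemma card_add_one_le [CharZero K] (hU : A.IsUnitFamily S U) {F : Finset (Fin 3 → K)}
    (hF : ∀ u ∈ F, u ∈ U) : F.card + 1 ≤ 2 ^ (16 * S.card) := by
  have hS : S.card ≠ 0 := by
    obtain ⟨v, hv⟩ := A.exists_not_isNonarchimedean
    exact Finset.card_ne_zero_of_mem (hU.mem_of_not_isNonarchimedean hv)
  have hlarge := hU.card_le_of_large (F := F.filter fun u => 16 * (S.card : ℝ) < A.height u)
    (fun u hu => hF u (Finset.filter_subset _ _ hu)) (fun u hu => (Finset.mem_filter.mp hu).2)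
  have hsmall := hU.card_le_of_small (F := F.filter fun u => ¬ 16 * (S.card : ℝ) < A.height u)
    (fun u hu => hF u (Finset.filter_subset _ _ hu))
    (fun u hu => not_lt.mp (Finset.mem_filter.mp hu).2)
  have hsplit := F.card_filter_add_card_filter_not fun u => 16 * (S.card : ℝ) < A.height u
  linarith [class_count_le hS]

theorem finite_and_ncard_add_one_le [CharZero K] (hU : A.IsUnitFamily S U) :
    U.Finite ∧ U.ncard + 1 ≤ 2 ^ (16 * S.card) := by
  have hfin : U.Finite := by
    by_contra hinf
    obtain ⟨F, hF, hcard⟩ := Set.Infinite.exists_subset_card_eq hinf (2 ^ (16 * S.card))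
    exact absurd (hU.card_add_one_le fun u hu => hF hu) (by omega)
  refine ⟨hfin, ?_⟩
  rw [Set.ncard_eq_toFinset_card U hfin]
  exact hU.card_add_one_le fun u hu => hfin.mem_toFinset.mp hu

end IsUnitFamily

end

end PlaceSystem

noncomputable section NumberFieldPlaces

open NumberField.HeightOneSpectrum ZeroSumTriple

variable {K : Type*} [Field K]

lemma not_isNonarchimedean_infinitePlace (w : InfinitePlace K) : ¬ IsNonarchimedean w.1 := by
  intro h
  have h2 := h 1 1
  rw [one_add_one_eq_two, map_one, max_self] at h2
  have hw : w 2 = 2 := by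
    rw [← w.norm_embedding_eq, map_ofNat]
    exact RCLike.norm_ofNat 2
  exact absurd (hw.symm.le.trans h2) (by norm_num)

lemma cross_unitTriple (x y : K) : cross ![x, 1 - x, -1] ![y, 1 - y, -1] = x - y := by
  simp only [cross, Matrix.cons_val_zero, Matrix.cons_val_one]
  ring

variable [NumberField K]

lemma adicAbv_eq_of_valuation_eq (v : HeightOneSpectrum (𝓞 K)) {x y : K}
    (h : v.valuation K x = v.valuation K y) : adicAbv K v x = adicAbv K v y := by
  rw [adicAbv_def, adicAbv_def, h]

lemma exists_adicAbv_eq_absNorm_zpow (v : HeightOneSpectrum (𝓞 K)) {x : K} (hx : x ≠ 0) :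
    ∃ n : ℤ, adicAbv K v x = (Ideal.absNorm v.asIdeal : ℝ) ^ n := by
  have h0 := (v.valuation K).ne_zero_iff.mpr hx
  refine ⟨Multiplicative.toAdd (WithZero.unzero h0), ?_⟩
  rw [adicAbv_def, WithZeroMulInt.toNNReal_neg_apply _ h0]
  push_cast
  rfl

lemma adicAbv_eq_of_abs_log_sub_lt (v : HeightOneSpectrum (𝓞 K)) {x y : K} (hx : x ≠ 0)
    (hy : y ≠ 0) (h : |Real.log (adicAbv K v x) - Real.log (adicAbv K v y)| < 1 / 3) :
    adicAbv K v x = adicAbv K v y := by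
  obtain ⟨m, hm⟩ := exists_adicAbv_eq_absNorm_zpow v hx
  obtain ⟨n, hn⟩ := exists_adicAbv_eq_absNorm_zpow v hy
  have hnorm : (2 : ℝ) ≤ (Ideal.absNorm v.asIdeal : ℝ) := by exact_mod_cast one_lt_absNorm v
  have hlog : 1 / 3 < Real.log (Ideal.absNorm v.asIdeal : ℝ) := by
    linarith [Real.log_le_log (by norm_num) hnorm, Real.log_two_gt_d9]
  rw [hm, hn, Real.log_zpow, Real.log_zpow, ← sub_mul, abs_mul,
    abs_of_pos (by linarith : 0 < Real.log (Ideal.absNorm v.asIdeal : ℝ))] at h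
  have hmn : m = n := by
    by_contra hne
    have h1 : (1 : ℝ) ≤ |(m : ℝ) - n| := by
      exact_mod_cast Int.one_le_abs (sub_ne_zero.mpr hne)
    nlinarith
  rw [hm, hn, hmn]

lemma finite_setOf_adicAbv_ne_one {x : K} (hx : x ≠ 0) :
    {v : HeightOneSpectrum (𝓞 K) | adicAbv K v x ≠ 1}.Finite := by
  refine ((FinitePlace.hasFiniteMulSupport hx).preimage
    FinitePlace.equivHeightOneSpectrum.symm.injective.injOn).subset fun v hv => ?_
  rwa [Set.mem_preimage, Function.mem_mulSupport, FinitePlace.equivHeightOneSpectrum_symm_apply,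
    FinitePlace.norm_embedding]

lemma prod_infinitePlace_mul_finprod_adicAbv {x : K} (hx : x ≠ 0) :
    (∏ w : InfinitePlace K, w x ^ w.mult) * ∏ᶠ v : HeightOneSpectrum (𝓞 K), adicAbv K v x = 1 := by
  rw [← prod_abs_eq_one hx, ← finprod_comp_equiv FinitePlace.equivHeightOneSpectrum.symm]
  congr 1
  refine finprod_congr fun v => ?_
  rw [FinitePlace.equivHeightOneSpectrum_symm_apply, FinitePlace.norm_embedding]

lemma finprod_le_prod_of_le_one {α : Type*} {f : α → ℝ} (hf : ∀ a, 0 ≤ f a)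
    (hfin : f.mulSupport.Finite) (T : Finset α) (h : ∀ a ∉ T, f a ≤ 1) :
    ∏ᶠ a, f a ≤ ∏ a ∈ T, f a := by
  have hsub : f.mulSupport ⊆ T ∪ (hfin.toFinset \ T) := fun a ha => by
    by_cases haT : a ∈ T <;> simp_all
  rw [finprod_eq_prod_of_mulSupport_subset (s := T ∪ (hfin.toFinset \ T)) f (mod_cast hsub),
    Finset.prod_union Finset.disjoint_sdiff]
  exact mul_le_of_le_one_right (Finset.prod_nonneg fun a _ => hf a)
    (Finset.prod_le_one (fun a _ => hf a) fun a ha => h a (Finset.mem_sdiff.mp ha).2)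

lemma sum_log_nonneg_of_integral_outside (T : Finset (HeightOneSpectrum (𝓞 K))) {x : K}
    (hx : x ≠ 0) (h : ∀ v ∉ T, adicAbv K v x ≤ 1) :
    0 ≤ ∑ w : InfinitePlace K, (w.mult : ℝ) * Real.log (w x) +
      ∑ v ∈ T, Real.log (adicAbv K v x) := by
  have hinf (w : InfinitePlace K) : 0 < w x ^ w.mult := pow_pos (w.pos_iff.mpr hx) _
  have hfin (v : HeightOneSpectrum (𝓞 K)) : 0 < adicAbv K v x := (adicAbv K v).pos hx
  have hprod : 1 ≤ (∏ w : InfinitePlace K, w x ^ w.mult) * ∏ v ∈ T, adicAbv K v x := by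
    rw [← prod_infinitePlace_mul_finprod_adicAbv hx]
    exact mul_le_mul_of_nonneg_left (finprod_le_prod_of_le_one (fun v => (hfin v).le)
      (finite_setOf_adicAbv_ne_one hx) T h) (Finset.prod_nonneg fun w _ => (hinf w).le)
  have hlog := Real.log_nonneg hprod
  rw [Real.log_mul (Finset.prod_pos fun w _ => hinf w).ne'
    (Finset.prod_pos fun v _ => hfin v).ne', Real.log_prod fun w _ => (hinf w).ne',
    Real.log_prod fun v _ => (hfin v).ne'] at hlog
  simpa only [Real.log_pow] using hlog

/-- The places of a number field, of which the infinite ones and those in `T` are listed. -/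
def PlaceSystem.ofNumberField (T : Finset (HeightOneSpectrum (𝓞 K))) :
    PlaceSystem K (InfinitePlace K ⊕ T) where
  abv := Sum.elim (fun w => w.1) fun v => adicAbv K v.1
  weight := Sum.elim (fun w => w.mult) fun _ => 1
  one_le_weight := by
    rintro (w | _)
    · exact Nat.one_le_cast.mpr w.mult_pos
    · exact le_rfl
  weight_le_two := by
    rintro (w | _)
    · simp only [Sum.elim_inl, InfinitePlace.mult]
      split_ifs <;> norm_num
    · exact one_le_two
  exists_not_isNonarchimedean :=
    ⟨.inl (Classical.arbitrary _), not_isNonarchimedean_infinitePlace _⟩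
  exists_embedding := by
    rintro (w | v) h
    · exact ⟨w.embedding, fun z => (w.norm_embedding_eq z).symm⟩
    · exact absurd (isNonarchimedean_adicAbv K v.1) h
  eq_of_abs_log_sub_lt := by
    rintro (w | v) h x y hx hy hxy
    · exact absurd h (not_isNonarchimedean_infinitePlace w)
    · exact adicAbv_eq_of_abs_log_sub_lt v.1 hx hy hxy
  outer := {f | ∃ v ∉ T, f = adicAbv K v}
  isNonarchimedean_of_mem_outer := by
    rintro f ⟨v, -, rfl⟩
    exact isNonarchimedean_adicAbv K v
  sum_log_nonneg := by
    intro D hD h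
    have := sum_log_nonneg_of_integral_outside T hD fun v hv => h _ ⟨v, hv, rfl⟩
    rw [← Finset.sum_coe_sort T] at this
    rw [Fintype.sum_sum_type]
    simp only [Sum.elim_inl, Sum.elim_inr, one_mul]
    exact this

lemma isUnitFamily_image {T T' : Finset (HeightOneSpectrum (𝓞 K))} {s : Set K}
    (hs₀ : ∀ x ∈ s, x ≠ 0) (hs₁ : ∀ x ∈ s, x ≠ 1)
    (h₀ : ∀ x ∈ s, ∀ y ∈ s, ∀ v ∉ T, v.valuation K x = v.valuation K y)
    (h₁ : ∀ x ∈ s, ∀ y ∈ s, ∀ v ∉ T, v.valuation K (1 - x) = v.valuation K (1 - y))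
    (hu₀ : ∀ x ∈ s, ∀ v ∉ T', adicAbv K v x = 1)
    (hu₁ : ∀ x ∈ s, ∀ v ∉ T', adicAbv K v (1 - x) = 1) :
    (PlaceSystem.ofNumberField T').IsUnitFamily
      (Finset.univ.disjSum (Finset.univ.filter fun v : T' => v.1 ∈ T))
      ((fun x => ![x, 1 - x, -1]) '' s) where
  zeroSumTriple := by
    rintro _ ⟨x, hx, rfl⟩
    refine ⟨fun i => ?_, by simp [Fin.sum_univ_three]⟩
    fin_cases i
    · exact hs₀ x hx
    · exact sub_ne_zero.mpr (hs₁ x hx).symm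
    · exact neg_ne_zero.mpr one_ne_zero
  eq_of_cross_eq_zero := by
    rintro _ _ ⟨x, -, rfl⟩ ⟨y, -, rfl⟩ h
    obtain rfl := sub_eq_zero.mp ((cross_unitTriple x y).symm.trans h)
    rfl
  outer_apply_eq_one := by
    rintro _ ⟨x, hx, rfl⟩ _ ⟨v, hv, rfl⟩ i
    fin_cases i
    · exact hu₀ x hx v hv
    · exact hu₁ x hx v hv
    · exact (AbsoluteValue.map_neg _ _).trans (map_one _)
  apply_eq_of_notMem := by
    rintro _ _ ⟨x, hx, rfl⟩ ⟨y, hy, rfl⟩ (w | v) hv i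
    · simp at hv
    have hvT : v.1 ∉ T := by simpa using hv
    fin_cases i
    · exact adicAbv_eq_of_valuation_eq v.1 (h₀ x hx y hy v.1 hvT)
    · exact adicAbv_eq_of_valuation_eq v.1 (h₁ x hx y hy v.1 hvT)
    · rfl
  mem_of_not_isNonarchimedean := by
    rintro (w | v) h
    · simp
    · exact absurd (isNonarchimedean_adicAbv K v.1) h

/-- The bound of Beukers and Schlickewei for the unit equation `x + y = 1`. -/
theorem unitEquation_ncard_add_one_le (T : Finset (HeightOneSpectrum (𝓞 K))) {s : Set K}
    (hs₀ : ∀ x ∈ s, x ≠ 0) (hs₁ : ∀ x ∈ s, x ≠ 1)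
    (h₀ : ∀ x ∈ s, ∀ y ∈ s, ∀ v ∉ T, v.valuation K x = v.valuation K y)
    (h₁ : ∀ x ∈ s, ∀ y ∈ s, ∀ v ∉ T, v.valuation K (1 - x) = v.valuation K (1 - y)) :
    s.Finite ∧ s.ncard + 1 ≤ Bconst (sCard K T) := by
  rcases s.eq_empty_or_nonempty with rfl | ⟨x₀, hx₀⟩
  · simp [Bconst, Nat.one_le_two_pow]
  have hf₀ := finite_setOf_adicAbv_ne_one (hs₀ x₀ hx₀)
  have hf₁ := finite_setOf_adicAbv_ne_one (sub_ne_zero.mpr (hs₁ x₀ hx₀).symm)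
  let T' := T ∪ (hf₀.toFinset ∪ hf₁.toFinset)
  have hT : T ⊆ T' := Finset.subset_union_left
  have hu₀ : ∀ x ∈ s, ∀ v ∉ T', adicAbv K v x = 1 := fun x hx v hv =>
    (adicAbv_eq_of_valuation_eq v (h₀ x hx x₀ hx₀ v fun h => hv (hT h))).trans <| by
      by_contra hne
      exact hv (by simp [T', hne])
  have hu₁ : ∀ x ∈ s, ∀ v ∉ T', adicAbv K v (1 - x) = 1 := fun x hx v hv =>
    (adicAbv_eq_of_valuation_eq v (h₁ x hx x₀ hx₀ v fun h => hv (hT h))).trans <| by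
      by_contra hne
      exact hv (by simp [T', hne])
  have hcard : (Finset.univ.disjSum (Finset.univ.filter fun v : T' => v.1 ∈ T) :
      Finset (InfinitePlace K ⊕ T')).card = sCard K T := by
    rw [Finset.card_disjSum, Finset.card_univ, sCard, add_comm, ← Fintype.card_subtype,
      ← Fintype.card_coe T]
    exact congrArg (· + _) (Fintype.card_congr (Equiv.subtypeSubtypeEquivSubtype fun h => hT h))
  have hinj : Set.InjOn (fun x : K => ![x, 1 - x, -1]) s := fun x _ y _ h => congrFun h 0
  have hmain := (isUnitFamily_image hs₀ hs₁ h₀ h₁ hu₀ hu₁).finite_and_ncard_add_one_le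
  rwa [Set.finite_image_iff hinj, hinj.ncard_image, hcard] at hmain

end NumberFieldPlaces

/-! ### Chordal distance and good reduction -/

noncomputable section BinaryForms

lemma eval_smul_of_isHomogeneous {σ R : Type*} [CommSemiring R] {H : MvPolynomial σ R} {n : ℕ}
    (hH : H.IsHomogeneous n) (c : R) (p : σ → R) : eval (c • p) H = c ^ n * eval p H := by
  rw [eval_eq, eval_eq, Finset.mul_sum]
  refine Finset.sum_congr rfl fun m hm => ?_
  have hdeg : ∑ i ∈ m.support, m i = n := by
    rw [← hH (mem_support_iff.mp hm), ← Finsupp.degree_apply, Finsupp.degree_eq_weight_one]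
    rfl
  simp only [Pi.smul_apply, smul_eq_mul, mul_pow, Finset.prod_mul_distrib,
    Finset.prod_pow_eq_pow_sum, hdeg]
  ring

variable {K : Type*} [Field K]

lemma eval_rep_mk_eq_zero_iff {H : MvPolynomial (Fin 2) K} {n : ℕ} (hH : H.IsHomogeneous n)
    {p : Fin 2 → K} (hp : p ≠ 0) :
    eval (Projectivization.mk K p hp).rep H = 0 ↔ eval p H = 0 := by
  obtain ⟨a, ha⟩ := Projectivization.exists_smul_eq_mk_rep K p hp
  rw [← ha, Units.smul_def, eval_smul_of_isHomogeneous hH, mul_eq_zero]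
  exact or_iff_right (pow_ne_zero _ a.ne_zero)

/-- The polynomial `H(X, 1)`. -/
def dehomogenize (H : MvPolynomial (Fin 2) K) : Polynomial K :=
  aeval ![Polynomial.X, 1] H

lemma natDegree_dehomogenize_le {H : MvPolynomial (Fin 2) K} {n : ℕ} (hH : H.IsHomogeneous n) :
    (dehomogenize H).natDegree ≤ n := by
  refine (aeval_natDegree_le H hH.totalDegree_le _ (n := 1) fun i => ?_).trans_eq (mul_one n)
  fin_cases i <;> simp

lemma homogenize_dehomogenize {H : MvPolynomial (Fin 2) K} {n : ℕ} (hH : H.IsHomogeneous n) :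
    (dehomogenize H).homogenize n = H :=
  Polynomial.homogenize_eq_of_isHomogeneous hH rfl

lemma eval_dehomogenize (H : MvPolynomial (Fin 2) K) (z : K) :
    (dehomogenize H).eval z = eval ![z, 1] H := by
  rw [dehomogenize, ← Polynomial.coe_evalRingHom, map_aeval, coe_eval₂Hom, eval₂_eq', eval_eq']
  simp

lemma eval_homogenize_one_zero (p : Polynomial K) (n : ℕ) :
    eval ![1, 0] (p.homogenize n) = p.coeff n := by
  rw [Polynomial.homogenize, map_sum, Finset.sum_eq_single (n, 0)]
  · simp [eval_monomial]
  · rintro ⟨i, j⟩ hij hne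
    have hj : j ≠ 0 := by
      rintro rfl
      exact hne (by simpa using hij)
    simp [eval_monomial, hj]
  · simp

lemma encard_projectiveZeros_le {H : MvPolynomial (Fin 2) K} {n : ℕ} (hH : H.IsHomogeneous n)
    (h0 : H ≠ 0) : {Q : P1 K | eval Q.rep H = 0}.encard ≤ n := by
  set p := dehomogenize H
  have hpH : p.homogenize n = H := homogenize_dehomogenize hH
  have hp : p ≠ 0 := by
    rintro hp
    rw [← hpH, hp, Polynomial.homogenize_zero] at h0
    exact h0 rfl
  have hdeg : p.natDegree ≤ n := natDegree_dehomogenize_le hH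
  let e := OnePoint.equivProjectivization K
  let Z : Set (OnePoint K) := e ⁻¹' {Q | eval Q.rep H = 0}
  have hZcoe (z : K) : (z : OnePoint K) ∈ Z ↔ z ∈ p.roots.toFinset := by
    rw [Multiset.mem_toFinset, Polynomial.mem_roots hp, Polynomial.IsRoot, eval_dehomogenize]
    exact eval_rep_mk_eq_zero_iff hH _
  have hZinfty : OnePoint.infty ∈ Z ↔ p.coeff n = 0 := by
    rw [← eval_homogenize_one_zero, hpH]
    exact eval_rep_mk_eq_zero_iff hH _
  have hroots : (((↑) : K → OnePoint K) '' p.roots.toFinset).encard ≤ p.natDegree := by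
    rw [OnePoint.coe_injective.encard_image, Set.encard_coe_eq_coe_finsetCard]
    exact_mod_cast (Multiset.toFinset_card_le _).trans p.card_roots'
  rw [← e.symm.injective.encard_image, Equiv.image_symm_eq_preimage]
  change Z.encard ≤ n
  by_cases hn : p.coeff n = 0
  · have hlt : p.natDegree + 1 ≤ n := hdeg.lt_of_ne fun h =>
      hp (Polynomial.leadingCoeff_eq_zero.mp (by rwa [Polynomial.leadingCoeff, h]))
    have hsub : Z ⊆ insert OnePoint.infty ((↑) '' (p.roots.toFinset : Set K)) := by
      rintro (_ | z) hz
      · exact .inl rfl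
      · exact .inr ⟨z, (hZcoe z).mp hz, rfl⟩
    exact (Set.encard_le_encard hsub).trans <| (Set.encard_insert_le _ _).trans <|
      (add_le_add_left hroots 1).trans (mod_cast hlt)
  · have hsub : Z ⊆ (↑) '' (p.roots.toFinset : Set K) := by
      rintro (_ | z) hz
      · exact absurd (hZinfty.mp hz) hn
      · exact ⟨z, (hZcoe z).mp hz, rfl⟩
    exact (Set.encard_le_encard hsub).trans (hroots.trans (mod_cast hdeg))

lemma exists_ne_zero_eval_eq_zero [IsAlgClosed K] {H : MvPolynomial (Fin 2) K} {n : ℕ}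
    (hH : H.IsHomogeneous n) (hn : n ≠ 0) : ∃ p ≠ 0, eval p H = 0 := by
  by_cases hdeg : (dehomogenize H).degree = 0
  · refine ⟨![1, 0], by simp, ?_⟩
    rw [← homogenize_dehomogenize hH, eval_homogenize_one_zero]
    exact Polynomial.coeff_eq_zero_of_natDegree_lt
      ((Polynomial.natDegree_eq_of_degree_eq_some hdeg).trans_lt (Nat.pos_of_ne_zero hn))
  · obtain ⟨z, hz⟩ := IsAlgClosed.exists_root _ hdeg
    exact ⟨![z, 1], by simp, (eval_dehomogenize H z).symm.trans hz⟩

end BinaryForms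

noncomputable section

namespace P1Map

variable {K : Type*} [Field K] {d : ℕ} (φ : P1Map K d)

lemma eq_zero_of_aeval_eq_zero {p : Fin 2 → AlgebraicClosure K} (hF : aeval p φ.F = 0)
    (hG : aeval p φ.G = 0) : p = 0 := by
  obtain ⟨a, b, rfl⟩ : ∃ a b, p = ![a, b] := ⟨p 0, p 1, by ext i; fin_cases i <;> rfl⟩
  obtain ⟨rfl, rfl⟩ := φ.coprime a b hF hG
  simp

lemma eval_ne_zero {p : Fin 2 → K} (hp : p ≠ 0) : ![eval p φ.F, eval p φ.G] ≠ 0 := by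
  intro h
  have h₀ := congrFun h 0
  have h₁ := congrFun h 1
  simp only [Matrix.cons_val_zero, Matrix.cons_val_one, Pi.zero_apply] at h₀ h₁
  refine hp (funext fun i => (algebraMap K (AlgebraicClosure K)).injective ?_)
  rw [Pi.zero_apply, map_zero]
  refine congrFun (φ.eq_zero_of_aeval_eq_zero (p := algebraMap K _ ∘ p) ?_ ?_) i
  · exact (aeval_algebraMap_apply _ p φ.F).trans ((congrArg _ h₀).trans (map_zero _))
  · exact (aeval_algebraMap_apply _ p φ.G).trans ((congrArg _ h₁).trans (map_zero _))

lemma toFun_mk {p : Fin 2 → K} (hp : p ≠ 0) :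
    φ.toFun (Projectivization.mk K p hp) =
      Projectivization.mk K ![eval p φ.F, eval p φ.G] (φ.eval_ne_zero hp) := by
  obtain ⟨a, b, rfl⟩ : ∃ a b, p = ![a, b] := ⟨p 0, p 1, by ext i; fin_cases i <;> rfl⟩
  exact φ.compat a b hp _

/-- The form whose zeros are the preimages of `[c 0 : c 1]`. -/
def fiberForm (c : Fin 2 → K) : MvPolynomial (Fin 2) K :=
  C (c 1) * φ.F - C (c 0) * φ.G

lemma isHomogeneous_fiberForm (c : Fin 2 → K) : (φ.fiberForm c).IsHomogeneous d :=
  (φ.homF.C_mul _).sub (φ.homG.C_mul _)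

lemma fiberForm_ne_zero (hd : d ≠ 0) {c : Fin 2 → K} (hc : c ≠ 0) : φ.fiberForm c ≠ 0 := by
  intro h
  let g := algebraMap K (AlgebraicClosure K)
  have hgc (i : Fin 2) (hi : c i ≠ 0) : g (c i) ≠ 0 := (map_ne_zero g).mpr hi
  have hsol (p : Fin 2 → AlgebraicClosure K) :
      g (c 1) * aeval p φ.F - g (c 0) * aeval p φ.G = 0 := by
    simpa [fiberForm] using congrArg (aeval p) h
  have hzero {H : MvPolynomial (Fin 2) K} (hH : H.IsHomogeneous d) :
      ∃ p : Fin 2 → AlgebraicClosure K, p ≠ 0 ∧ aeval p H = 0 := by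
    obtain ⟨p, hp, hp0⟩ := exists_ne_zero_eval_eq_zero (hH.map g) hd
    exact ⟨p, hp, by rwa [eval_map] at hp0⟩
  by_cases h1 : c 1 = 0
  · have h0 : c 0 ≠ 0 := fun h0 => hc (by ext i; fin_cases i <;> assumption)
    obtain ⟨p, hp, hF⟩ := hzero φ.homF
    have := hsol p
    rw [hF, mul_zero, zero_sub, neg_eq_zero] at this
    exact hp (φ.eq_zero_of_aeval_eq_zero hF ((mul_eq_zero.mp this).resolve_left (hgc 0 h0)))
  · obtain ⟨p, hp, hG⟩ := hzero φ.homG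
    have := hsol p
    rw [hG, mul_zero, sub_zero] at this
    exact hp (φ.eq_zero_of_aeval_eq_zero ((mul_eq_zero.mp this).resolve_left (hgc 1 h1)) hG)

lemma encard_fiber_le (hd : d ≠ 0) (c : P1 K) : {Q | φ.toFun Q = c}.encard ≤ d := by
  refine (Set.encard_le_encard fun Q hQ => ?_).trans
    (encard_projectiveZeros_le (φ.isHomogeneous_fiberForm c.rep)
      (φ.fiberForm_ne_zero hd c.rep_nonzero))
  rw [Set.mem_ofPred_eq, ← c.mk_rep, ← Q.mk_rep, toFun_mk, Projectivization.mk_eq_mk_iff'] at hQ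
  obtain ⟨a, ha⟩ := hQ
  have h₀ : a * c.rep 0 = eval Q.rep φ.F := congrFun ha 0
  have h₁ : a * c.rep 1 = eval Q.rep φ.G := congrFun ha 1
  rw [Set.mem_ofPred_eq, fiberForm, map_sub, map_mul, map_mul, eval_C, eval_C, ← h₀, ← h₁]
  ring

end P1Map

end

noncomputable section ChordalDistance

/-- The `2 × 2` determinant with rows `p` and `q`, which vanishes when `p` and `q` represent the
same point of the projective line. -/
def wedge {R : Type*} [CommRing R] (p q : Fin 2 → R) : R :=
  p 0 * q 1 - p 1 * q 0

section Wedge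

variable {R : Type*} [CommRing R]

lemma wedge_map {S : Type*} [CommRing S] (f : R →+* S) (p q : Fin 2 → R) :
    wedge (f ∘ p) (f ∘ q) = f (wedge p q) := by
  simp [wedge]

lemma wedge_smul_smul (a b : R) (p q : Fin 2 → R) :
    wedge (a • p) (b • q) = a * b * wedge p q := by
  simp only [wedge, Pi.smul_apply, smul_eq_mul]
  ring

lemma wedge_swap (p q : Fin 2 → R) : wedge p q = -wedge q p := by
  simp only [wedge]
  ring

lemma mul_wedge (p q r : Fin 2 → R) (i : Fin 2) :
    q i * wedge p r = wedge p q * r i + wedge q r * p i := by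
  fin_cases i <;> simp [wedge] <;> ring

lemma exists_smul_eq_of_wedge_eq_zero {p q : Fin 2 → R} (hp : ∃ i, IsUnit (p i))
    (h : wedge p q = 0) : ∃ c : R, c • p = q := by
  obtain ⟨i, u, hu⟩ := hp
  have hcross (j : Fin 2) : p i * q j = q i * p j := by
    have h' : p 0 * q 1 = p 1 * q 0 := sub_eq_zero.mp h
    fin_cases i <;> fin_cases j <;> grind
  refine ⟨↑u⁻¹ * q i, funext fun j => ?_⟩
  rw [Pi.smul_apply, smul_eq_mul, mul_assoc, ← hcross, ← hu, Units.inv_mul_cancel_left]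

lemma wedge_dvd_wedge_eval {F G : MvPolynomial (Fin 2) R} {n : ℕ} (hF : F.IsHomogeneous n)
    (hG : G.IsHomogeneous n) {p : Fin 2 → R} (hp : ∃ i, IsUnit (p i)) (q : Fin 2 → R) :
    wedge p q ∣ wedge ![eval p F, eval p G] ![eval q F, eval q G] := by
  let π := Ideal.Quotient.mk (Ideal.span {wedge p q})
  have hπ (x : R) : π x = 0 ↔ wedge p q ∣ x := by
    rw [Ideal.Quotient.eq_zero_iff_mem, Ideal.mem_span_singleton]
  obtain ⟨c, hc⟩ : ∃ c, c • (π ∘ p) = π ∘ q := by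
    refine exists_smul_eq_of_wedge_eq_zero (hp.imp fun i hi => hi.map π) ?_
    rw [wedge_map, hπ]
  have heval {H : MvPolynomial (Fin 2) R} (hH : H.IsHomogeneous n) :
      π (eval q H) = c ^ n * π (eval p H) := by
    rw [map_eval, map_eval, ← hc, eval_smul_of_isHomogeneous (hH.map π)]
  rw [← hπ]
  change π (eval p F * eval q G - eval p G * eval q F) = 0
  rw [map_sub, map_mul, map_mul, heval hF, heval hG]
  ring

end Wedge

variable {K : Type*} [Field K]

lemma eq_of_wedge_rep_eq_zero {P Q : P1 K} (h : wedge P.rep Q.rep = 0) : P = Q := by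
  obtain ⟨c, hc⟩ := exists_smul_eq_of_wedge_eq_zero
    ((Function.ne_iff.mp P.rep_nonzero).imp fun _ => IsUnit.mk0 _) h
  rw [← P.mk_rep, ← Q.mk_rep, eq_comm, Projectivization.mk_eq_mk_iff']
  exact ⟨c, hc⟩

variable {Γ : Type*} [LinearOrderedCommGroupWithZero Γ] (w : Valuation K Γ)

/-- The sup norm of a pair with respect to the valuation `w`. -/
def supNorm (p : Fin 2 → K) : Γ :=
  max (w (p 0)) (w (p 1))

/-- The `w`-adic chordal distance on the projective line, the multiplicative form of `logDist`. -/
def chordalDist (P Q : P1 K) : Γ :=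
  w (wedge P.rep Q.rep) / (supNorm w P.rep * supNorm w Q.rep)

lemma le_supNorm (p : Fin 2 → K) (i : Fin 2) : w (p i) ≤ supNorm w p := by
  fin_cases i
  · exact le_max_left _ _
  · exact le_max_right _ _

lemma exists_eq_supNorm (p : Fin 2 → K) : ∃ i, w (p i) = supNorm w p := by
  rcases max_choice (w (p 0)) (w (p 1)) with h | h
  · exact ⟨0, h.symm⟩
  · exact ⟨1, h.symm⟩

lemma supNorm_ne_zero {p : Fin 2 → K} (hp : p ≠ 0) : supNorm w p ≠ 0 := by
  obtain ⟨i, hi⟩ := Function.ne_iff.mp hp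
  exact (((zero_lt_iff (a := w (p i))).mpr (w.ne_zero_iff.mpr hi)).trans_le (le_supNorm w p i)).ne'

lemma supNorm_smul (a : K) (p : Fin 2 → K) : supNorm w (a • p) = w a * supNorm w p := by
  simp only [supNorm, Pi.smul_apply, smul_eq_mul, map_mul]
  exact (Monotone.map_max fun _ _ h => by gcongr).symm

lemma chordalDist_mk {p q : Fin 2 → K} (hp : p ≠ 0) (hq : q ≠ 0) :
    chordalDist w (Projectivization.mk K p hp) (Projectivization.mk K q hq) =
      w (wedge p q) / (supNorm w p * supNorm w q) := by
  obtain ⟨a, ha⟩ := Projectivization.exists_smul_eq_mk_rep K p hp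
  obtain ⟨b, hb⟩ := Projectivization.exists_smul_eq_mk_rep K q hq
  have hab : w a * w b ≠ 0 := by simp
  rw [chordalDist, ← ha, ← hb, Units.smul_def, Units.smul_def, wedge_smul_smul, supNorm_smul,
    supNorm_smul, map_mul, map_mul, mul_mul_mul_comm, mul_div_mul_left _ _ hab]

lemma chordalDist_mul (P Q : P1 K) :
    chordalDist w P Q * (supNorm w P.rep * supNorm w Q.rep) = w (wedge P.rep Q.rep) :=
  div_mul_cancel₀ _ (mul_ne_zero (supNorm_ne_zero w P.rep_nonzero)
    (supNorm_ne_zero w Q.rep_nonzero))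

lemma chordalDist_comm (P Q : P1 K) : chordalDist w P Q = chordalDist w Q P := by
  rw [chordalDist, chordalDist, wedge_swap, Valuation.map_neg, mul_comm (supNorm w P.rep)]

lemma chordalDist_ne_zero {P Q : P1 K} (h : P ≠ Q) : chordalDist w P Q ≠ 0 :=
  div_ne_zero (w.ne_zero_iff.mpr fun h0 => h (eq_of_wedge_rep_eq_zero h0))
    (mul_ne_zero (supNorm_ne_zero w P.rep_nonzero) (supNorm_ne_zero w Q.rep_nonzero))

lemma chordalDist_triangle (P Q R : P1 K) :
    chordalDist w P R ≤ max (chordalDist w P Q) (chordalDist w Q R) := by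
  have hpos (P : P1 K) : 0 < supNorm w P.rep := zero_lt_iff.mpr (supNorm_ne_zero w P.rep_nonzero)
  obtain ⟨i, hi⟩ := exists_eq_supNorm w Q.rep
  have hle : supNorm w Q.rep * w (wedge P.rep R.rep) ≤
      max (chordalDist w P Q) (chordalDist w Q R) *
        (supNorm w P.rep * supNorm w Q.rep * supNorm w R.rep) := by
    rw [← hi, ← map_mul, mul_wedge, hi]
    refine (w.map_add _ _).trans (max_le ?_ ?_)
    · rw [map_mul, ← chordalDist_mul, mul_assoc]
      gcongr
      · exact le_max_left _ _
      · exact le_supNorm w R.rep i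
    · rw [map_mul, ← chordalDist_mul, mul_assoc, mul_comm (_ * _) (w _),
        mul_assoc (supNorm w P.rep)]
      gcongr
      · exact le_max_right _ _
      · exact le_supNorm w P.rep i
  rw [chordalDist, div_le_iff₀ (mul_pos (hpos P) (hpos R))]
  refine le_of_mul_le_mul_left (hle.trans_eq ?_) (hpos Q)
  ac_rfl

end ChordalDistance

noncomputable section GoodReduction

lemma exists_isUnit_eval {O L : Type*} [CommRing O] [Field L] (ρ : O →+* L) [IsLocalHom ρ]
    {F G : MvPolynomial (Fin 2) O}
    (h : ∀ x y : L, eval ![x, y] (map ρ F) = 0 → eval ![x, y] (map ρ G) = 0 → x = 0 ∧ y = 0)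
    {p : Fin 2 → O} (hp : ∃ i, IsUnit (p i)) : ∃ i, IsUnit (![eval p F, eval p G] i) := by
  have hρ {z : O} (hz : ¬ IsUnit z) : ρ z = 0 := by
    by_contra hne
    exact hz (isUnit_of_map_unit ρ z (IsUnit.mk0 _ hne))
  have hpair : ρ ∘ p = ![ρ (p 0), ρ (p 1)] := by
    ext i
    fin_cases i <;> rfl
  by_contra! hcon
  obtain ⟨h0, h1⟩ := h (ρ (p 0)) (ρ (p 1))
    (by rw [← hpair, ← map_eval]; exact hρ (hcon 0))
    (by rw [← hpair, ← map_eval]; exact hρ (hcon 1))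
  obtain ⟨i, hi⟩ := hp
  fin_cases i
  · exact (hi.map ρ).ne_zero h0
  · exact (hi.map ρ).ne_zero h1

variable {K : Type*} [Field K] {Γ : Type*} [LinearOrderedCommGroupWithZero Γ] (w : Valuation K Γ)

lemma supNorm_subtype_eq_one {p : Fin 2 → w.valuationSubring} (hp : ∃ i, IsUnit (p i)) :
    supNorm w (w.valuationSubring.subtype ∘ p) = 1 := by
  obtain ⟨i, hi⟩ := hp
  have hle (i : Fin 2) : w (p i) ≤ 1 := (p i).2
  refine le_antisymm (max_le (hle 0) (hle 1)) ?_
  rw [← (Valuation.integer.integers w).isUnit_iff_valuation_eq_one.mp hi]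
  exact le_supNorm w (w.valuationSubring.subtype ∘ p) i

lemma exists_primitive_mk_eq (P : P1 K) :
    ∃ p : Fin 2 → w.valuationSubring, (∃ i, IsUnit (p i)) ∧
      ∃ hp, Projectivization.mk K (w.valuationSubring.subtype ∘ p) hp = P := by
  obtain ⟨i, hi⟩ := exists_eq_supNorm w P.rep
  have h0 : w (P.rep i) ≠ 0 := hi ▸ supNorm_ne_zero w P.rep_nonzero
  have hPi : P.rep i ≠ 0 := w.ne_zero_iff.mp h0
  have hle (j : Fin 2) : w ((P.rep i)⁻¹ * P.rep j) ≤ 1 := by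
    rw [map_mul, map_inv₀, inv_mul_le_one₀ (zero_lt_iff.mpr h0), hi]
    exact le_supNorm w _ j
  refine ⟨fun j => ⟨_, hle j⟩, ⟨i, ?_⟩, smul_ne_zero (inv_ne_zero hPi) P.rep_nonzero, ?_⟩
  · simp only [inv_mul_cancel₀ hPi]
    exact isUnit_one
  · conv_rhs => rw [← P.mk_rep]
    exact (Projectivization.mk_eq_mk_iff' ..).mpr ⟨_, rfl⟩

variable {d : ℕ} (φ : P1Map K d) {c : K} {F G : MvPolynomial (Fin 2) w.valuationSubring}

lemma toFun_mk_subtype (hc : c ≠ 0) (hF : map w.valuationSubring.subtype F = C c * φ.F)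
    (hG : map w.valuationSubring.subtype G = C c * φ.G) {p : Fin 2 → w.valuationSubring}
    (hp : w.valuationSubring.subtype ∘ p ≠ 0) :
    ∃ h, φ.toFun (Projectivization.mk K (w.valuationSubring.subtype ∘ p) hp) =
      Projectivization.mk K (w.valuationSubring.subtype ∘ ![eval p F, eval p G]) h := by
  have heval {H₀ : MvPolynomial (Fin 2) w.valuationSubring} {H : MvPolynomial (Fin 2) K}
      (h : map w.valuationSubring.subtype H₀ = C c * H) :
      w.valuationSubring.subtype (eval p H₀) = c * eval (w.valuationSubring.subtype ∘ p) H := by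
    rw [map_eval, h, map_mul, eval_C]
  have hsmul : w.valuationSubring.subtype ∘ ![eval p F, eval p G] =
      c • ![eval (w.valuationSubring.subtype ∘ p) φ.F,
        eval (w.valuationSubring.subtype ∘ p) φ.G] := by
    ext i
    fin_cases i
    · exact heval hF
    · exact heval hG
  refine ⟨hsmul ▸ smul_ne_zero hc (φ.eval_ne_zero hp), ?_⟩
  rw [φ.toFun_mk, eq_comm, Projectivization.mk_eq_mk_iff']
  exact ⟨c, hsmul.symm⟩

/-- Primitive vectors have primitive images, so the denominators of both distances are `1`. -/
lemma chordalDist_toFun_le_of_isUnit_eval (hc : c ≠ 0)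
    (hF : map w.valuationSubring.subtype F = C c * φ.F)
    (hG : map w.valuationSubring.subtype G = C c * φ.G)
    (hprim : ∀ p : Fin 2 → w.valuationSubring, (∃ i, IsUnit (p i)) →
      ∃ i, IsUnit (![eval p F, eval p G] i)) (P Q : P1 K) :
    chordalDist w (φ.toFun P) (φ.toFun Q) ≤ chordalDist w P Q := by
  have hhom {H₀ : MvPolynomial (Fin 2) w.valuationSubring} {H : MvPolynomial (Fin 2) K}
      (hH : H.IsHomogeneous d) (h : map w.valuationSubring.subtype H₀ = C c * H) :
      H₀.IsHomogeneous d :=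
    .of_map (f := w.valuationSubring.subtype) Subtype.val_injective (h ▸ hH.C_mul c)
  obtain ⟨p, hp, hp0, rfl⟩ := exists_primitive_mk_eq w P
  obtain ⟨q, hq, hq0, rfl⟩ := exists_primitive_mk_eq w Q
  obtain ⟨hp0', hφp⟩ := toFun_mk_subtype w φ hc hF hG hp0
  obtain ⟨hq0', hφq⟩ := toFun_mk_subtype w φ hc hF hG hq0
  obtain ⟨z, hz⟩ := wedge_dvd_wedge_eval (hhom φ.homF hF) (hhom φ.homG hG) hp q
  rw [hφp, hφq, chordalDist_mk, chordalDist_mk, supNorm_subtype_eq_one w hp,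
    supNorm_subtype_eq_one w hq, supNorm_subtype_eq_one w (hprim p hp),
    supNorm_subtype_eq_one w (hprim q hq), wedge_map, wedge_map, hz, mul_one, div_one, div_one,
    map_mul, map_mul]
  exact mul_le_of_le_one_right' z.2

variable [NumberField K] {v : HeightOneSpectrum (𝓞 K)} {φ}

lemma GoodReductionAt.chordalDist_toFun_le (h : GoodReductionAt φ v) (P Q : P1 K) :
    chordalDist (v.valuation K) (φ.toFun P) (φ.toFun Q) ≤ chordalDist (v.valuation K) P Q := by
  obtain ⟨c, hc, F, G, hF, hG, -, h⟩ := h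
  exact chordalDist_toFun_le_of_isUnit_eval _ φ hc hF hG (fun p => exists_isUnit_eval _ h) P Q

lemma GoodReductionAt.chordalDist_iterate_toFun_le (h : GoodReductionAt φ v) (n : ℕ) (P Q : P1 K) :
    chordalDist (v.valuation K) (φ.toFun^[n] P) (φ.toFun^[n] Q) ≤
      chordalDist (v.valuation K) P Q := by
  induction n with
  | zero => exact le_rfl
  | succ n ih =>
    rw [Function.iterate_succ_apply', Function.iterate_succ_apply']
    exact (h.chordalDist_toFun_le _ _).trans ih

end GoodReduction

/-! ### Tails of a cycle of length three -/

section PeriodThree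

open Function

variable {α : Type*} {f : α → α}

lemma encard_biUnion_le_mul {ι : Type*} {s : Set ι} (hs : s.Finite) {t : ι → Set α} {n : ℕ∞}
    (h : ∀ x ∈ s, (t x).encard ≤ n) : (⋃ x ∈ s, t x).encard ≤ s.encard * n := by
  lift s to Finset ι using hs
  rw [Set.encard_coe_eq_coe_finsetCard, ← nsmul_eq_mul]
  exact (s.set_encard_biUnion_le t).trans (Finset.sum_le_card_nsmul _ _ _ h)

lemma notMem_periodicPts_of_iterate_eq {x y : α} {n : ℕ} (hy : y ∉ periodicPts f)
    (h : f^[n] x = y) : x ∉ periodicPts f := fun hx =>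
  hy (h ▸ (bijOn_periodicPts f).mapsTo.iterate n hx)

/-- Of the preimages of a point of the cycle, exactly one is itself on the cycle. -/
lemma encard_setOf_apply_mem_periodicOrbit_le {e : ℕ∞} (hf : ∀ c, {x | f x = c}.encard ≤ e + 1)
    (p : α) :
    {x | x ∉ periodicPts f ∧ f x ∈ periodicOrbit f p}.encard ≤ minimalPeriod f p * e := by
  have hfib (c : α) (hc : c ∈ periodicPts f) :
      {x | x ∉ periodicPts f ∧ f x = c}.encard ≤ e := by
    obtain ⟨b, hb, hbc⟩ := (bijOn_periodicPts f).surjOn hc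
    have hsub : insert b {x | x ∉ periodicPts f ∧ f x = c} ⊆ {x | f x = c} :=
      Set.insert_subset hbc fun x hx => hx.2
    have := (Set.encard_le_encard hsub).trans (hf c)
    rw [Set.encard_insert_of_notMem fun h => h.1 hb] at this
    exact (ENat.add_le_add_iff_right ENat.one_ne_top).mp this
  have hcover : {x | x ∉ periodicPts f ∧ f x ∈ periodicOrbit f p} ⊆
      ⋃ i ∈ (Finset.range (minimalPeriod f p) : Set ℕ),
        {x | x ∉ periodicPts f ∧ f x = f^[i] p} := by
    rintro x ⟨hx, hfx⟩
    obtain ⟨i, hi, h⟩ := List.mem_map.mp (Cycle.mem_coe_iff.mp hfx)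
    exact Set.mem_biUnion (Finset.mem_coe.mpr (Finset.mem_range.mpr (List.mem_range.mp hi)))
      ⟨hx, h.symm⟩
  refine (Set.encard_le_encard hcover).trans
    ((encard_biUnion_le_mul (Finset.finite_toSet _) fun i hi => hfib _ ?_).trans_eq ?_)
  · have hp : 0 < minimalPeriod f p := (Nat.zero_le i).trans_lt (by simpa using hi)
    exact (bijOn_periodicPts f).mapsTo.iterate i (minimalPeriod_pos_iff_mem_periodicPts.mp hp)
  · rw [Set.encard_coe_eq_coe_finsetCard, Finset.card_range]

lemma exists_iterate_notMem_apply_mem_periodicOrbit {p q : α} (hp : p ∈ periodicPts f)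
    (hq : q ∉ periodicPts f) (h : ∃ n, f^[n] q = p) :
    ∃ k, f^[k] q ∉ periodicPts f ∧ f (f^[k] q) ∈ periodicOrbit f p := by
  obtain ⟨n, rfl⟩ := h
  have hex : ∃ m, f^[m] q ∈ periodicPts f := ⟨n, hp⟩
  obtain ⟨k, hk⟩ : ∃ k, Nat.find hex = k + 1 :=
    Nat.exists_eq_succ_of_ne_zero fun h0 => hq ((Nat.find_eq_zero hex).mp h0)
  have hper : f^[k + 1] q ∈ periodicPts f := hk ▸ Nat.find_spec hex
  refine ⟨k, Nat.find_min hex (by omega), ?_⟩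
  have hkn : k + 1 ≤ n := hk ▸ Nat.find_min' hex hp
  rw [← iterate_succ_apply' f, ← Nat.sub_add_cancel hkn, iterate_add_apply,
    periodicOrbit_apply_iterate_eq hper]
  exact self_mem_periodicOrbit hper

/-- The points from which `u` is reached after some number `k ≡ r` modulo `3` of steps, such that
`k` further steps lead from `u` to a point of period dividing `3`. -/
def tailBranch (f : α → α) (r : ℕ) (u : α) : Set α :=
  {q | ∃ k, k % 3 = r ∧ f^[k] q = u ∧ IsPeriodicPt f 3 (f^[k] u)}

/-- When `k > 0` is divisible by `3`, the point preceding `t` is reached after `k - 1 ≡ 2` steps. -/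
lemma mem_tailBranch_of_iterate_eq {t q : α} (ht : IsPeriodicPt f 3 (f t)) {k : ℕ}
    (hk : f^[k] q = t) :
    q = t ∨ q ∈ tailBranch f 1 t ∨ q ∈ tailBranch f 2 t ∨
      ∃ u ∈ tailBranch f 1 t, f u = t ∧ q ∈ tailBranch f 2 u := by
  have hper (j : ℕ) (hj : j ≠ 0) : IsPeriodicPt f 3 (f^[j] t) := by
    obtain ⟨i, rfl⟩ := Nat.exists_eq_succ_of_ne_zero hj
    exact ht.apply_iterate i
  obtain rfl | h1 | h2 | ⟨m, rfl⟩ :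
      k = 0 ∨ k % 3 = 1 ∨ k % 3 = 2 ∨ ∃ m, k = 3 * m + 3 := by
    by_cases h : k % 3 = 0 ∧ k ≠ 0
    · exact .inr (.inr (.inr ⟨k / 3 - 1, by omega⟩))
    · omega
  · exact .inl hk
  · exact .inr (.inl ⟨k, h1, hk, hper k (by omega)⟩)
  · exact .inr (.inr (.inl ⟨k, h2, hk, hper k (by omega)⟩))
  · have hu : f (f^[3 * m + 2] q) = t := by rwa [← iterate_succ_apply' f]
    refine .inr (.inr (.inr ⟨_, ⟨1, rfl, hu, hper 1 one_ne_zero⟩, hu, ?_⟩))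
    refine ⟨3 * m + 2, by omega, rfl, ?_⟩
    rw [iterate_succ_apply, hu]
    exact hper _ (Nat.succ_ne_zero _)

lemma encard_setOf_iterate_eq_le {N : ℕ} (hN : ∀ u ∉ periodicPts f,
      minimalPeriod f (f^[3] u) = 3 → ∀ r, 0 < r → r < 3 → (tailBranch f r u).encard ≤ N)
    {t : α} (ht : t ∉ periodicPts f) (h3 : minimalPeriod f (f t) = 3) :
    {q | ∃ k, f^[k] q = t}.encard ≤ (N + 1) ^ 2 := by
  have hft : f t ∈ periodicPts f := minimalPeriod_pos_iff_mem_periodicPts.mp (by omega)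
  have hbranch {r : ℕ} (hr : 0 < r) (hr' : r < 3) : (tailBranch f r t).encard ≤ N :=
    hN t ht ((minimalPeriod_apply_iterate hft 2).trans h3) r hr hr'
  have hbranch₂ (u : α) (hu : f u = t) : (tailBranch f 2 u).encard ≤ N := by
    refine hN u (notMem_periodicPts_of_iterate_eq (n := 1) ht hu) ?_ 2 two_pos (by norm_num)
    change minimalPeriod f (f (f (f u))) = 3
    rw [hu, minimalPeriod_apply hft, h3]
  set S := {u ∈ tailBranch f 1 t | f u = t} with hS
  have hSle : S.encard ≤ N :=
    (Set.encard_le_encard (Set.sep_subset _ _)).trans (hbranch one_pos (by norm_num))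
  have hcover : {q | ∃ k, f^[k] q = t} ⊆
      insert t (tailBranch f 1 t) ∪ (tailBranch f 2 t ∪ ⋃ u ∈ S, tailBranch f 2 u) := by
    rintro q ⟨k, hk⟩
    obtain rfl | h | h | ⟨u, hu, hut, h⟩ :=
      mem_tailBranch_of_iterate_eq (h3 ▸ isPeriodicPt_minimalPeriod f (f t)) hk
    · exact .inl (.inl rfl)
    · exact .inl (.inr h)
    · exact .inr (.inl h)
    · exact .inr (.inr (Set.mem_biUnion ⟨hu, hut⟩ h))
  calc _ ≤ _ := Set.encard_le_encard hcover
    _ ≤ (insert t (tailBranch f 1 t)).encard +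
          ((tailBranch f 2 t).encard + (⋃ u ∈ S, tailBranch f 2 u).encard) :=
        (Set.encard_union_le _ _).trans (by gcongr; exact Set.encard_union_le _ _)
    _ ≤ (N + 1) + (N + N * N) := by
        gcongr
        · exact (Set.encard_insert_le _ _).trans (by gcongr; exact hbranch one_pos (by norm_num))
        · exact hbranch two_pos (by norm_num)
        · exact (encard_biUnion_le_mul (Set.finite_of_encard_le_coe hSle)
            fun u hu => hbranch₂ u hu.2).trans (by gcongr)
    _ = (N + 1) ^ 2 := by ring

lemma encard_tail_le {e N : ℕ} (hf : ∀ c, {x | f x = c}.encard ≤ e + 1)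
    (hN : ∀ u ∉ periodicPts f, minimalPeriod f (f^[3] u) = 3 →
      ∀ r, 0 < r → r < 3 → (tailBranch f r u).encard ≤ N)
    {p : α} (hp : minimalPeriod f p = 3) :
    {q | q ∉ periodicPts f ∧ ∃ n, f^[n] q = p}.encard ≤ 3 * e * (N + 1) ^ 2 := by
  have hper : p ∈ periodicPts f := minimalPeriod_pos_iff_mem_periodicPts.mp (by omega)
  set E := {t | t ∉ periodicPts f ∧ f t ∈ periodicOrbit f p}
  have hE : E.encard ≤ 3 * e := by
    simpa only [hp, Nat.cast_ofNat] using encard_setOf_apply_mem_periodicOrbit_le hf p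
  have hcover : {q | q ∉ periodicPts f ∧ ∃ n, f^[n] q = p} ⊆
      ⋃ t ∈ E, {q | ∃ k, f^[k] q = t} := by
    rintro q ⟨hq, hqp⟩
    obtain ⟨k, hk⟩ := exists_iterate_notMem_apply_mem_periodicOrbit hper hq hqp
    exact Set.mem_biUnion hk ⟨k, rfl⟩
  have htree (t : α) (ht : t ∈ E) : {q | ∃ k, f^[k] q = t}.encard ≤ (N + 1) ^ 2 := by
    obtain ⟨n, hn⟩ := (mem_periodicOrbit_iff hper).mp ht.2
    exact encard_setOf_iterate_eq_le hN ht.1 (by rw [← hn, minimalPeriod_apply_iterate hper, hp])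
  calc _ ≤ _ := Set.encard_le_encard hcover
    _ ≤ E.encard * (N + 1) ^ 2 :=
        encard_biUnion_le_mul (Set.finite_of_encard_le_coe (k := 3 * e) (mod_cast hE)) htree
    _ ≤ _ := by gcongr

end PeriodThree

section Ultrametric

lemma eq_of_nonexpanding_of_three_cycle {α Γ : Type*} [LinearOrder Γ] {D : α → α → Γ}
    (hcomm : ∀ x y, D x y = D y x) (htri : ∀ x y z, D x z ≤ max (D x y) (D y z)) {g h : α → α}
    (hg : ∀ x y, D (g x) (g y) ≤ D x y) (hh : ∀ x y, D (h x) (h y) ≤ D x y)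
    {q u c c₃ c' : α} (gq : g q = u) (gu : g u = c₃) (gc : g c = c₃) (gc₃ : g c₃ = c')
    (gc' : g c' = c) (hu : h u = c) (hc₃ : h c₃ = c₃) (hc' : h c' = c') :
    D q c₃ = D q u ∧ D q c = D q u := by
  have hcycle_le : D c c₃ ≤ D c' c := by simpa only [gc, gc'] using hg c' c
  have hc_le : D c c₃ ≤ D q c := calc
    D c c₃ ≤ D u c₃ := by simpa only [hu, hc₃] using hh u c₃
    _ ≤ D q c := by simpa only [gq, gc] using hg q c
  have hc'_le : D c' c ≤ D q c₃ := calc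
    D c' c ≤ D u c' := by simpa only [hu, hc', hcomm c c'] using hh u c'
    _ ≤ D q c₃ := by simpa only [gq, gc₃] using hg q c₃
  have hq : D q c = D q c₃ := by
    refine le_antisymm ((htri q c₃ c).trans (max_le le_rfl ?_))
      ((htri q c c₃).trans (max_le le_rfl hc_le))
    exact hcomm c₃ c ▸ hcycle_le.trans hc'_le
  have hu_le : D u c₃ ≤ D q c₃ := by
    rw [← hq]
    simpa only [gq, gc] using hg q c
  have hqu : D q c₃ = D q u := by
    refine le_antisymm ((htri q u c₃).trans (max_le le_rfl ?_))
      ((htri q c₃ u).trans (max_le le_rfl (hcomm u c₃ ▸ hu_le)))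
    simpa only [gq, gu] using hg q u
  exact ⟨hqu, hq.trans hqu⟩

end Ultrametric

noncomputable section CrossRatio

variable {K : Type*} [Field K]

/-- The cross-ratio of four points of the projective line, normalised so that `crossRatio U C D Q`
takes the values `0`, `1`, `∞` at `Q = D`, `U`, `C`. -/
def crossRatio (U C D Q : P1 K) : K :=
  wedge U.rep C.rep * wedge Q.rep D.rep / (wedge U.rep D.rep * wedge Q.rep C.rep)

lemma wedge_rep_ne_zero {P Q : P1 K} (h : P ≠ Q) : wedge P.rep Q.rep ≠ 0 :=
  fun h0 => h (eq_of_wedge_rep_eq_zero h0)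

variable {U C D Q : P1 K}

lemma one_sub_crossRatio (hUD : U ≠ D) (hQC : Q ≠ C) :
    1 - crossRatio U C D Q =
      wedge C.rep D.rep * wedge Q.rep U.rep / (wedge U.rep D.rep * wedge Q.rep C.rep) := by
  have hden := mul_ne_zero (wedge_rep_ne_zero hUD) (wedge_rep_ne_zero hQC)
  rw [crossRatio, one_sub_div hden]
  congr 1
  simp only [wedge]
  ring

lemma crossRatio_ne_zero (hUC : U ≠ C) (hUD : U ≠ D) (hQC : Q ≠ C) (hQD : Q ≠ D) :
    crossRatio U C D Q ≠ 0 :=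
  div_ne_zero (mul_ne_zero (wedge_rep_ne_zero hUC) (wedge_rep_ne_zero hQD))
    (mul_ne_zero (wedge_rep_ne_zero hUD) (wedge_rep_ne_zero hQC))

lemma crossRatio_ne_one (hUD : U ≠ D) (hCD : C ≠ D) (hQU : Q ≠ U) (hQC : Q ≠ C) :
    crossRatio U C D Q ≠ 1 := by
  rw [ne_comm, ← sub_ne_zero, one_sub_crossRatio hUD hQC]
  exact div_ne_zero (mul_ne_zero (wedge_rep_ne_zero hCD) (wedge_rep_ne_zero hQU))
    (mul_ne_zero (wedge_rep_ne_zero hUD) (wedge_rep_ne_zero hQC))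

lemma injOn_crossRatio (hUC : U ≠ C) (hUD : U ≠ D) (hCD : C ≠ D) :
    Set.InjOn (crossRatio U C D) {Q | Q ≠ C} := by
  intro Q hQ Q' hQ' h
  have hratio : wedge Q.rep D.rep / wedge Q.rep C.rep =
      wedge Q'.rep D.rep / wedge Q'.rep C.rep := by
    simp only [crossRatio, mul_div_mul_comm] at h
    exact mul_left_cancel₀ (div_ne_zero (wedge_rep_ne_zero hUC) (wedge_rep_ne_zero hUD)) h
  rw [div_eq_div_iff (wedge_rep_ne_zero hQ) (wedge_rep_ne_zero hQ')] at hratio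
  have hmul : wedge Q.rep Q'.rep * wedge C.rep D.rep = 0 := by
    simp only [wedge] at hratio ⊢
    linear_combination -hratio
  exact eq_of_wedge_rep_eq_zero ((mul_eq_zero.mp hmul).resolve_right (wedge_rep_ne_zero hCD))

variable {Γ : Type*} [LinearOrderedCommGroupWithZero Γ] (w : Valuation K Γ)

lemma map_wedge_mul_div_mul (P₁ P₂ P₃ P₄ : P1 K) :
    w (wedge P₁.rep P₂.rep * wedge P₃.rep P₄.rep / (wedge P₁.rep P₄.rep * wedge P₃.rep P₂.rep)) =
      chordalDist w P₁ P₂ * chordalDist w P₃ P₄ /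
        (chordalDist w P₁ P₄ * chordalDist w P₃ P₂) := by
  have hne (P : P1 K) : supNorm w P.rep ≠ 0 := supNorm_ne_zero w P.rep_nonzero
  have h₁ := hne P₁
  have h₂ := hne P₂
  have h₃ := hne P₃
  have h₄ := hne P₄
  simp only [map_div₀, map_mul, ← chordalDist_mul]
  field_simp

lemma map_crossRatio (hQU : Q ≠ U) (hC : chordalDist w Q C = chordalDist w Q U)
    (hD : chordalDist w Q D = chordalDist w Q U) :
    w (crossRatio U C D Q) = chordalDist w U C / chordalDist w U D := by
  rw [crossRatio, map_wedge_mul_div_mul, hC, hD, mul_div_mul_right _ _ (chordalDist_ne_zero w hQU)]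

lemma map_one_sub_crossRatio (hUD : U ≠ D) (hQU : Q ≠ U) (hQC : Q ≠ C)
    (hC : chordalDist w Q C = chordalDist w Q U) :
    w (1 - crossRatio U C D Q) = chordalDist w C D / chordalDist w U D := by
  have hswap : wedge C.rep D.rep * wedge Q.rep U.rep / (wedge U.rep D.rep * wedge Q.rep C.rep) =
      wedge D.rep C.rep * wedge Q.rep U.rep / (wedge D.rep U.rep * wedge Q.rep C.rep) := by
    rw [wedge_swap C.rep, wedge_swap U.rep, neg_mul, neg_mul, neg_div_neg_eq]
  rw [one_sub_crossRatio hUD hQC, hswap, map_wedge_mul_div_mul, hC,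
    mul_div_mul_right _ _ (chordalDist_ne_zero w hQU), chordalDist_comm w D C,
    chordalDist_comm w D U]

lemma encard_add_one_le_of_equidistant [NumberField K] (T : Finset (HeightOneSpectrum (𝓞 K)))
    (hUC : U ≠ C) (hUD : U ≠ D) (hCD : C ≠ D) {A : Set (P1 K)}
    (hA : ∀ Q ∈ A, Q ≠ U ∧ Q ≠ C ∧ Q ≠ D)
    (hdist : ∀ Q ∈ A, ∀ v ∉ T,
      chordalDist (v.valuation K) Q C = chordalDist (v.valuation K) Q U ∧
      chordalDist (v.valuation K) Q D = chordalDist (v.valuation K) Q U) :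
    A.encard + 1 ≤ Bconst (sCard K T) := by
  have hinj : Set.InjOn (crossRatio U C D) A :=
    (injOn_crossRatio hUC hUD hCD).mono fun Q hQ => (hA Q hQ).2.1
  obtain ⟨hfin, hcard⟩ := unitEquation_ncard_add_one_le T (s := crossRatio U C D '' A)
    (by
      rintro _ ⟨Q, hQ, rfl⟩
      exact crossRatio_ne_zero hUC hUD (hA Q hQ).2.1 (hA Q hQ).2.2)
    (by
      rintro _ ⟨Q, hQ, rfl⟩
      exact crossRatio_ne_one hUD hCD (hA Q hQ).1 (hA Q hQ).2.1)
    (by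
      rintro _ ⟨Q, hQ, rfl⟩ _ ⟨Q', hQ', rfl⟩ v hv
      obtain ⟨⟨hC, hD⟩, hC', hD'⟩ := And.intro (hdist Q hQ v hv) (hdist Q' hQ' v hv)
      rw [map_crossRatio _ (hA Q hQ).1 hC hD, map_crossRatio _ (hA Q' hQ').1 hC' hD'])
    (by
      rintro _ ⟨Q, hQ, rfl⟩ _ ⟨Q', hQ', rfl⟩ v hv
      rw [map_one_sub_crossRatio _ hUD (hA Q hQ).1 (hA Q hQ).2.1 (hdist Q hQ v hv).1,
        map_one_sub_crossRatio _ hUD (hA Q' hQ').1 (hA Q' hQ').2.1 (hdist Q' hQ' v hv).1])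
  rw [← hinj.encard_image, ← hfin.cast_ncard_eq]
  exact_mod_cast hcard

end CrossRatio

section Tails

open Function

variable {K : Type*} [Field K] [NumberField K] {T : Finset (HeightOneSpectrum (𝓞 K))} {d : ℕ}
  {φ : P1Map K d}

lemma GoodReductionOutside.chordalDist_eq_of_mem_tailBranch (hφ : GoodReductionOutside φ T)
    {r : ℕ} {U : P1 K} (h3 : IsPeriodicPt φ.toFun 3 (φ.toFun^[3] U)) {Q : P1 K}
    (hQ : Q ∈ tailBranch φ.toFun r U) {v : HeightOneSpectrum (𝓞 K)} (hv : v ∉ T) :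
    chordalDist (v.valuation K) Q (φ.toFun^[r] (φ.toFun^[3] U)) =
        chordalDist (v.valuation K) Q U ∧
      chordalDist (v.valuation K) Q (φ.toFun^[3] U) = chordalDist (v.valuation K) Q U := by
  obtain ⟨k, rfl, hQ, hk⟩ := hQ
  have hc : φ.toFun^[k] (φ.toFun^[3] U) = φ.toFun^[k % 3] (φ.toFun^[3] U) :=
    (h3.iterate_mod_apply k).symm
  have hU : φ.toFun^[k] U = φ.toFun^[k % 3] (φ.toFun^[3] U) := by
    rw [← hc, ← iterate_add_apply, add_comm, iterate_add_apply, hk.eq]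
  have hcycle : φ.toFun^[k] (φ.toFun^[k] (φ.toFun^[k] (φ.toFun^[3] U))) = φ.toFun^[3] U := by
    rw [← iterate_add_apply, ← iterate_add_apply]
    exact h3.trans_dvd ⟨k, by ring⟩
  exact eq_of_nonexpanding_of_three_cycle (chordalDist_comm _) (chordalDist_triangle _)
    ((hφ v hv).chordalDist_iterate_toFun_le k) ((hφ v hv).chordalDist_iterate_toFun_le 3)
    hQ hU hc (by rw [← hc]) hcycle rfl (h3.apply_iterate _) ((h3.apply_iterate k).apply_iterate k)

lemma GoodReductionOutside.encard_tailBranch_add_one_le (hφ : GoodReductionOutside φ T) {U : P1 K}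
    (hU : U ∉ periodicPts φ.toFun) (h3 : minimalPeriod φ.toFun (φ.toFun^[3] U) = 3) {r : ℕ}
    (hr : 0 < r) (hr' : r < 3) :
    (tailBranch φ.toFun r U).encard + 1 ≤ Bconst (sCard K T) := by
  have hc : IsPeriodicPt φ.toFun 3 (φ.toFun^[3] U) := by
    simpa only [h3] using isPeriodicPt_minimalPeriod φ.toFun (φ.toFun^[3] U)
  have hne {X Y : P1 K} (hX : X ∉ periodicPts φ.toFun) (hY : IsPeriodicPt φ.toFun 3 Y) : X ≠ Y :=
    fun h => hX (h ▸ mk_mem_periodicPts three_pos hY)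
  refine encard_add_one_le_of_equidistant T (hne hU hc) (hne hU (hc.apply_iterate r))
    (fun h => not_isPeriodicPt_of_pos_of_lt_minimalPeriod hr.ne' (hr'.trans_eq h3.symm) h.symm) ?_
    fun Q hQ v hv => (hφ.chordalDist_eq_of_mem_tailBranch hc hQ hv).symm
  rintro Q ⟨k, rfl, hQ, -⟩
  have hQper := notMem_periodicPts_of_iterate_eq hU hQ
  refine ⟨?_, hne hQper hc, hne hQper (hc.apply_iterate _)⟩
  rintro rfl
  exact hU (mk_mem_periodicPts (hr.trans_le (Nat.mod_le k 3)) hQ)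

lemma GoodReductionOutside.encard_tailOf_le (hφ : GoodReductionOutside φ T) (hd : d ≠ 0)
    {P : P1 K} (hP : minimalPeriod φ.toFun P = 3) :
    (TailOf φ P).encard ≤ 3 * (d - 1 : ℕ) * Bconst (sCard K T) ^ 2 := by
  obtain ⟨N, hN⟩ : ∃ N, Bconst (sCard K T) = N + 1 :=
    Nat.exists_eq_add_one.mpr (Nat.two_pow_pos _)
  have hfib (c : P1 K) : {Q | φ.toFun Q = c}.encard ≤ (d - 1 : ℕ) + 1 :=
    (φ.encard_fiber_le hd c).trans_eq (mod_cast (Nat.sub_one_add_one hd).symm)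
  have hbranch (U : P1 K) (hU : U ∉ periodicPts φ.toFun)
      (h3 : minimalPeriod φ.toFun (φ.toFun^[3] U) = 3) (r : ℕ) (hr : 0 < r) (hr' : r < 3) :
      (tailBranch φ.toFun r U).encard ≤ N := by
    have := hφ.encard_tailBranch_add_one_le hU h3 hr hr'
    rwa [hN, Nat.cast_add, Nat.cast_one, ENat.add_le_add_iff_right ENat.one_ne_top] at this
  rw [hN, Nat.cast_add, Nat.cast_one]
  exact encard_tail_le hfib hbranch hP

end Tails

/-- **Lemma (tail of a point of period three).** If `P ∈ ℙ¹(K)` is a periodic point of `φ` of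
period `3`, then `|Tail(φ,K,P)| ≤ L₃(d,|S|) = ((1 + 3B(|S|))B(|S|) + 1)(d-1)`. -/
theorem tailOf_period_three_bound
    {K : Type*} [Field K] [NumberField K]
    (T : Finset (HeightOneSpectrum (𝓞 K))) {d : ℕ} (hd : 2 ≤ d)
    (φ : P1Map K d) (hgr : GoodReductionOutside φ T)
    (P : P1 K) (hP : Function.minimalPeriod φ.toFun P = 3) :
    (TailOf φ P).Finite ∧ (TailOf φ P).ncard ≤ L3const d (sCard K T) := by
  set B := Bconst (sCard K T)
  have hcard : (TailOf φ P).encard ≤ (3 * (d - 1) * B ^ 2 : ℕ) := by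
    push_cast
    exact hgr.encard_tailOf_le (by omega) hP
  obtain ⟨hfin, hncard⟩ := Set.encard_le_coe_iff_finite_ncard_le.mp hcard
  refine ⟨hfin, hncard.trans ?_⟩
  calc 3 * (d - 1) * B ^ 2 = 3 * B * B * (d - 1) := by ring
    _ ≤ ((1 + 3 * B) * B + 1) * (d - 1) := by gcongr; nlinarith
    _ = L3const d (sCard K T) := rfl
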